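/- arXiv:2212.10332 — 4 statements merged into one kernel-verified Lean document; each statement's English description precedes it below -/
import Mathlib

section
/- Let R be a complete Noetherian local integral domain and let M, N be finitely generated R-modules. Then Ext^1_R(M,N) is weakly cotorsion, i.e., Ext^1_R(Q, Ext^1_R(M,N)) = 0, where Q is the fraction field of R. -/
/-!
For `s : R`, call `E` derived `s`-complete if every sequence `x` in `E` is of the form
`x k = y k - s • y (k + 1)` for a unique sequence `y`. An `I`-adically complete module is derived
`s`-complete for all `s ∈ I`, by `y k = ∑ j, s ^ j • x (k + j)`. The property passes to
`Hom(P, E)`, by solving pointwise, and to kernels and cokernels, because `E ↦ (ℕ → E)` is exact.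
Hence it passes from `R` to finitely presented modules, and from `E` to every `Extⁿ(M, E)`, a
homology module of `Hom(P, E)` for a projective resolution `P` of `M`.

If `s` acts invertibly on `V`, then it acts surjectively on `H = Extⁿ(V, E)`. A divisibility chain
`h k = s • h (k + 1)` in `H` solves the equation for `x = 0`, so `H = 0` when `E` is derived
`s`-complete. Over a complete local ring this kills `Extⁿ(S⁻¹R, Extᵐ(M, N))` as soon as `S` meets
the maximal ideal. Otherwise `S` consists of units and `S⁻¹R = R` is projective.
-/

open CategoryTheory

universe u

/-- `ext1 R M N` is `Ext¹_R(M, N)`. -/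
noncomputable abbrev ext1 (R : Type u) [CommRing R] (M N : ModuleCat.{u} R) : ModuleCat R :=
  ((Ext R (ModuleCat R) 1).obj (Opposite.op M)).obj N

section Telescope

variable {R : Type*} [CommRing R] {E F G : Type*} [AddCommGroup E] [Module R E]
  [AddCommGroup F] [Module R F] [AddCommGroup G] [Module R G]

/-- The endomorphism `y ↦ (y k - s • y (k + 1))ₖ` of the module of sequences in `E`. It is obtained
by applying `Hom(-, E)` to the telescope resolution `R^(ℕ) → R^(ℕ)` of the localization `R[1/s]`. -/
def telescope (s : R) (E : Type*) [AddCommGroup E] [Module R E] : (ℕ → E) →ₗ[R] (ℕ → E) :=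
  LinearMap.id - s • LinearMap.funLeft R E Nat.succ

theorem telescope_apply (s : R) (y : ℕ → E) (k : ℕ) :
    telescope s E y k = y k - s • y (k + 1) :=
  rfl

theorem telescope_comp (s : R) (f : E →ₗ[R] F) (y : ℕ → E) :
    telescope s F (f ∘ y) = f ∘ telescope s E y := by
  ext k
  simp [telescope_apply]

/-- Derived completeness of `E` with respect to the element `s`, i.e.
`Hom(R[1/s], E) = Ext¹(R[1/s], E) = 0`, expressed through the telescope resolution of `R[1/s]`. -/
def IsDerivedComplete (s : R) (E : Type*) [AddCommGroup E] [Module R E] : Prop :=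
  Function.Bijective (telescope s E)

namespace IsDerivedComplete

variable {s : R}

theorem of_linearEquiv (hE : IsDerivedComplete s E) (e : E ≃ₗ[R] F) : IsDerivedComplete s F := by
  have h : telescope s F = e.toLinearMap.compLeft ℕ ∘ₗ telescope s E ∘ₗ
      e.symm.toLinearMap.compLeft ℕ := by
    ext y k
    simp [telescope_apply]
  have he : Function.Bijective (e.toLinearMap.compLeft ℕ) := e.bijective.comp_left
  have he' : Function.Bijective (e.symm.toLinearMap.compLeft ℕ) := e.symm.bijective.comp_left
  rw [IsDerivedComplete, h]
  exact he.comp (hE.comp he')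

theorem ker (hE : IsDerivedComplete s E) (hF : IsDerivedComplete s F) (g : E →ₗ[R] F) :
    IsDerivedComplete s (LinearMap.ker g) := by
  let i := (LinearMap.ker g).subtype
  have hi : Function.Injective (i ∘ · : (ℕ → LinearMap.ker g) → ℕ → E) :=
    (LinearMap.ker g).subtype_injective.comp_left
  refine ⟨fun y z hyz => hi (hE.injective ?_), fun x => ?_⟩
  · simp only [telescope_comp, hyz]
  · obtain ⟨y, hy⟩ := hE.surjective (i ∘ x)
    have hgy : g ∘ y = 0 := hF.injective <| by
      ext k
      simp [telescope_comp, hy, i]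
    refine ⟨fun k => ⟨y k, congrFun hgy k⟩, hi ?_⟩
    simp only [← telescope_comp]
    exact hy

theorem of_exact_of_surjective (hE : IsDerivedComplete s E) (hF : IsDerivedComplete s F)
    {f : E →ₗ[R] F} {g : F →ₗ[R] G} (hfg : Function.Exact f g) (hg : Function.Surjective g) :
    IsDerivedComplete s G := by
  refine ⟨(injective_iff_map_eq_zero _).mpr fun z hz => ?_, fun x => ?_⟩
  · obtain ⟨y, rfl⟩ := hg.comp_left z
    rw [telescope_comp] at hz
    choose a ha using fun k => (hfg _).mp (congrFun hz k)
    obtain ⟨b, rfl⟩ := hE.surjective a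
    have hy : y = f ∘ b := hF.injective <| by
      rw [telescope_comp]
      exact (funext ha).symm
    ext k
    simp [hy, hfg.apply_apply_eq_zero]
  · obtain ⟨x, rfl⟩ := hg.comp_left x
    obtain ⟨y, rfl⟩ := hF.surjective x
    exact ⟨g ∘ y, telescope_comp s g y⟩

theorem linearMap (hE : IsDerivedComplete s E) (P : Type*) [AddCommGroup P] [Module R P] :
    IsDerivedComplete s (P →ₗ[R] E) := by
  let e : (ℕ → E) ≃ₗ[R] (ℕ → E) := LinearEquiv.ofBijective (telescope s E) hE
  refine ⟨fun y z hyz => ?_, fun x => ⟨fun k => .proj k ∘ₗ e.symm.toLinearMap ∘ₗ .pi x, ?_⟩⟩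
  · ext k p
    refine congrFun (hE.injective (a₁ := fun k => y k p) (a₂ := fun k => z k p) ?_) k
    ext k
    exact LinearMap.congr_fun (congrFun hyz k) p
  · ext k p
    exact congrFun (e.apply_symm_apply (LinearMap.pi x p)) k

theorem of_isAdicComplete {I : Ideal R} [IsAdicComplete I E] (hs : s ∈ I) :
    IsDerivedComplete s E := by
  have hsI (n : ℕ) (x : E) : s ^ n • x ∈ (I ^ n • ⊤ : Submodule R E) :=
    Submodule.smul_mem_smul (Ideal.pow_mem_pow hs n) trivial
  refine ⟨(injective_iff_map_eq_zero _).mpr fun y hy => ?_, fun x => ?_⟩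
  · have hy' (n k : ℕ) : y k = s ^ n • y (k + n) := by
      induction n with
      | zero => simp
      | succ n ih =>
        rw [ih, pow_succ, mul_smul, ← add_assoc]
        exact congrArg _ (sub_eq_zero.mp (congrFun hy (k + n)))
    ext k
    refine IsHausdorff.haus (I := I) inferInstance (y k) fun n => SModEq.zero.mpr ?_
    exact hy' n k ▸ hsI n _
  · let S (k n : ℕ) : E := ∑ j ∈ Finset.range n, s ^ j • x (k + j)
    have hS (k n : ℕ) : S k (n + 1) = x k + s • S (k + 1) n := by
      simp [S, Finset.sum_range_succ', Finset.smul_sum, smul_smul, pow_succ', add_comm,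
        add_left_comm]
    have hS_cauchy (k : ℕ) {m n : ℕ} (hmn : m ≤ n) :
        S k m ≡ S k n [SMOD (I ^ m • ⊤ : Submodule R E)] := by
      induction n, hmn using Nat.le_induction with
      | base => rfl
      | succ n hmn ih =>
        have h : s ^ n • x (k + n) ≡ 0 [SMOD (I ^ m • ⊤ : Submodule R E)] :=
          SModEq.zero.mpr (Submodule.smul_mono_left (Ideal.pow_le_pow_right hmn) (hsI n _))
        simpa only [S, Finset.sum_range_succ, add_zero] using ih.add h.symm
    choose y hy using fun k => IsPrecomplete.prec (I := I) inferInstance (hS_cauchy k)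
    refine ⟨y, funext fun k => ?_⟩
    rw [← sub_eq_zero]
    refine IsHausdorff.haus (I := I) inferInstance _ fun n => ?_
    have hy_succ : x k + s • S (k + 1) n ≡ y k [SMOD (I ^ n • ⊤ : Submodule R E)] :=
      hS k n ▸ (hS_cauchy k n.le_succ).symm.trans (hy k n)
    have h := (hy_succ.symm.sub ((hy (k + 1) n).symm.smul s)).sub (SModEq.refl (x k))
    simpa [telescope_apply] using h

theorem pi (hE : IsDerivedComplete s E) (ι : Type*) : IsDerivedComplete s (ι → E) :=
  (hE.linearMap (ι →₀ R)).of_linearEquiv (Finsupp.llift E R R ι).symm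

theorem of_finitePresentation (hR : IsDerivedComplete s R) [Module.FinitePresentation R E] :
    IsDerivedComplete s E := by
  obtain ⟨n, m, f, g, hf, hgf⟩ := Module.FinitePresentation.exists_fin' R E
  exact of_exact_of_surjective (hR.pi _) (hR.pi _) hgf hf

theorem subsingleton_of_smul_surjective (hE : IsDerivedComplete s E)
    (hs : Function.Surjective (s • · : E → E)) : Subsingleton E := by
  choose t ht using hs
  refine subsingleton_of_forall_eq 0 fun x => ?_
  have h : (fun k => t^[k] x) = 0 := hE.injective <| by
    rw [map_zero]
    ext k
    simp only [telescope_apply, Function.iterate_succ_apply', ht, sub_self, Pi.zero_apply]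
  exact congrFun h 0

end IsDerivedComplete

end Telescope

universe v

section Ext

variable {R : Type u} [CommRing R] {s : R}

theorem IsDerivedComplete.homology {S : ShortComplex (ModuleCat.{v} R)}
    (h₁ : IsDerivedComplete s S.X₁) (h₂ : IsDerivedComplete s S.X₂)
    (h₃ : IsDerivedComplete s S.X₃) :
    IsDerivedComplete s S.homology :=
  (h₁.of_exact_of_surjective (h₂.ker h₃ S.g.hom) (LinearMap.exact_map_mkQ_range _)
    (Submodule.mkQ_surjective _)).of_linearEquiv S.moduleCatHomologyIso.symm.toLinearEquiv

theorem smul_surjective_homology {S : ShortComplex (ModuleCat.{v} R)}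
    (h : ∀ x, S.g x = 0 → ∃ y z, S.g y = 0 ∧ s • y + S.f z = x) :
    Function.Surjective (s • · : S.homology → S.homology) := by
  let e := S.moduleCatHomologyIso.symm.toLinearEquiv
  intro x
  obtain ⟨x, rfl⟩ := e.surjective x
  obtain ⟨⟨x, hx⟩, rfl⟩ := Submodule.Quotient.mk_surjective _ x
  obtain ⟨y, z, hy, rfl⟩ := h x hx
  refine ⟨e (Submodule.Quotient.mk ⟨y, hy⟩), (e.map_smul s _).symm.trans (congrArg e ?_)⟩
  refine (Submodule.Quotient.eq _).mpr ⟨-z, Subtype.ext ?_⟩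
  change S.f (-z) = s • y - (s • y + S.f z)
  rw [map_neg, sub_add_cancel_left]

theorem smul_surjective_homology_linearYonedaObj {ι : Type*} [AddRightCancelSemigroup ι] [One ι]
    {C : ChainComplex (ModuleCat.{v} R) ι} {f : C ⟶ C} (η : Homotopy (𝟙 C) (s • f))
    (E : ModuleCat.{v} R) (n : ι) :
    Function.Surjective (s • · : (C.linearYonedaObj R E).homology n → _) := by
  refine smul_surjective_homology fun (c : C.X n ⟶ E) hc => ?_
  let i := (ComplexShape.down ι).prev n
  let j := (ComplexShape.down ι).next n
  have hc : C.d i n ≫ c = 0 := hc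
  have hη : 𝟙 (C.X n) = C.d n j ≫ η.hom j n + η.hom n i ≫ C.d i n + s • f.f n := η.comm n
  refine ⟨f.f n ≫ c, η.hom j n ≫ c, ?_, ?_⟩
  · change C.d i n ≫ f.f n ≫ c = 0
    rw [← f.comm_assoc, hc, Limits.comp_zero]
  · change s • (f.f n ≫ c) + C.d n j ≫ η.hom j n ≫ c = c
    calc s • (f.f n ≫ c) + C.d n j ≫ η.hom j n ≫ c
      _ = (C.d n j ≫ η.hom j n + η.hom n i ≫ C.d i n + s • f.f n) ≫ c := by
        simp [hc, add_comm]
      _ = c := by rw [← hη, Category.id_comp]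

theorem nonempty_homotopy_smul_lift {C : Type*} [Category* C] [Abelian C] [Linear R C] {V : C}
    (P : ProjectiveResolution V) {t : V ⟶ V} (ht : s • t = 𝟙 V) :
    Nonempty (Homotopy (𝟙 P.complex) (s • ProjectiveResolution.lift t P P)) := by
  refine ⟨ProjectiveResolution.liftHomotopy (𝟙 V) _ _ (by simp) ?_⟩
  rw [Linear.smul_comp, ProjectiveResolution.lift_commutes, ← ht]
  ext : 1
  simp only [HomologicalComplex.smul_f_apply, HomologicalComplex.comp_f,
    ChainComplex.single₀_map_f_zero]
  exact (Linear.comp_smul ..).symm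

variable [Small.{v} R]

theorem IsDerivedComplete.ext_obj {E : ModuleCat.{v} R} (hE : IsDerivedComplete s E)
    (M : ModuleCat.{v} R) (n : ℕ) :
    IsDerivedComplete s (((Ext R (ModuleCat.{v} R) n).obj (Opposite.op M)).obj E) := by
  let P := ProjectiveResolution.of M
  have hP (i : ℕ) : IsDerivedComplete s (P.complex.X i ⟶ E) :=
    (hE.linearMap _).of_linearEquiv ModuleCat.homLinearEquiv.symm
  exact (IsDerivedComplete.homology (hP _) (hP _) (hP _)).of_linearEquiv
    (P.isoExt n E).symm.toLinearEquiv

theorem smul_surjective_ext_obj {V : ModuleCat.{v} R}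
    (hV : IsUnit (algebraMap R (Module.End R V) s)) (E : ModuleCat.{v} R) (n : ℕ) :
    Function.Surjective (s • · : ((Ext R (ModuleCat.{v} R) n).obj (Opposite.op V)).obj E → _) := by
  let P := ProjectiveResolution.of V
  obtain ⟨t, hst, -⟩ := isUnit_iff_exists.mp hV
  have hst : s • (ModuleCat.ofHom t : V ⟶ V) = 𝟙 V := ModuleCat.hom_ext hst
  obtain ⟨η⟩ := nonempty_homotopy_smul_lift (R := R) P hst
  let e := (P.isoExt (R := R) n E).toLinearEquiv
  intro x
  obtain ⟨y, hy⟩ := smul_surjective_homology_linearYonedaObj η E n (e x)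
  exact ⟨e.symm y, e.injective ((e.map_smul s _).trans (by simpa using hy))⟩

theorem subsingleton_ext_obj_of_isDerivedComplete {V E : ModuleCat.{v} R}
    (hV : IsUnit (algebraMap R (Module.End R V) s)) (hE : IsDerivedComplete s E) (n : ℕ) :
    Subsingleton (((Ext R (ModuleCat.{v} R) n).obj (Opposite.op V)).obj E) :=
  (hE.ext_obj V n).subsingleton_of_smul_surjective (smul_surjective_ext_obj hV E n)

end Ext

theorem ext_one_weakly_cotorsion_of_finite_general
    (R : Type u) [CommRing R] [Small.{v} R] [IsLocalRing R]
    [IsAdicComplete (IsLocalRing.maximalIdeal R) R]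
    (S : Submonoid R) (A : Type v) [CommRing A] [Algebra R A] [IsLocalization S A]
    (M N : Type v) [AddCommGroup M] [Module R M]
    [AddCommGroup N] [Module R N] [Module.FinitePresentation R N] (m n : ℕ) :
    Subsingleton (((Ext R (ModuleCat.{v} R) (n + 1)).obj (.op (.of R A))).obj
      (((Ext R (ModuleCat.{v} R) m).obj (.op (.of R M))).obj (.of R N))) := by
  by_cases hS : S ≤ IsUnit.submonoid R
  · have := Module.Projective.of_equiv (IsLocalization.atUnits R S (S := A) hS).toLinearEquiv
    have : Projective (ModuleCat.of R A) := (IsProjective.iff_projective (R := R) A).mp this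
    exact ModuleCat.subsingleton_of_isZero (isZero_Ext_succ_of_projective _ _ n)
  · obtain ⟨s, hs, hs_unit⟩ := SetLike.not_le_iff_exists.mp hS
    have : IsLocalizedModule S (Algebra.linearMap R A) :=
      (isLocalizedModule_iff_isLocalization' S A).mpr inferInstance
    have hA := IsLocalizedModule.map_units (Algebra.linearMap R A) ⟨s, hs⟩
    have hR : IsDerivedComplete s R :=
      .of_isAdicComplete ((IsLocalRing.mem_maximalIdeal s).mpr hs_unit)
    have hN : IsDerivedComplete s (ModuleCat.of R N) := hR.of_finitePresentation (E := N)
    exact subsingleton_ext_obj_of_isDerivedComplete hA (hN.ext_obj _ m) (n + 1)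

/-- Over a complete Noetherian local integral domain, `Ext¹_R(M,N)` of finitely generated
modules is weakly cotorsion: `Ext¹_R(Q, Ext¹_R(M,N)) = 0` where `Q = Frac(R)`. -/
theorem ext_one_weakly_cotorsion_of_finite
    (R : Type u) [CommRing R] [IsNoetherianRing R] [IsLocalRing R] [IsDomain R]
    [IsAdicComplete (IsLocalRing.maximalIdeal R) R]
    (M N : Type u) [AddCommGroup M] [Module R M] [Module.Finite R M]
    [AddCommGroup N] [Module R N] [Module.Finite R N] :
    Subsingleton (ext1 R (ModuleCat.of R (FractionRing R))
      (ext1 R (ModuleCat.of R M) (ModuleCat.of R N))) := by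
  have := Module.finitePresentation_of_finite R N
  exact ext_one_weakly_cotorsion_of_finite_general R (nonZeroDivisors R) (FractionRing R) M N 1 0
end

section
/- Let R be a d-dimensional complete Noetherian local Cohen-Macaulay ring with canonical module ω_R. Then every nonzero endomorphism of H^d_m(R) is surjective if and only if R is an integral domain. -/
open CategoryTheory IsLocalRing

universe u

/-- A Noetherian local ring is Cohen–Macaulay if some system of parameters, i.e. a regular
sequence in the maximal ideal of length equal to the Krull dimension, exists. -/
def IsCohenMacaulayLocalRing (R : Type u) [CommRing R] [IsLocalRing R] : Prop :=
  ∃ rs : List R, (∀ r ∈ rs, r ∈ maximalIdeal R) ∧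
    RingTheory.Sequence.IsRegular R rs ∧
    (rs.length : WithBot (WithTop ℕ)) = ringKrullDim R

/-!
Write `H = H^d_m(R)`. As `R` has grade `d` along `m`, the direct system defining `H` is injective
and `(0 :_H I) ≃ Ext^d(R ⧸ I, R)` for every `m`-primary ideal `I`; if `I` is generated by a maximal
regular sequence, Rees's isomorphism turns this into `(0 :_H I) ≃ R ⧸ I`. These submodules, for the
powers of a fixed regular sequence, replace Matlis duality: `H` is faithful because the ideals `I`
intersect in `0`, and every endomorphism of `H` is multiplication by an element of `R` because `R`
is complete. So if all nonzero endomorphisms are surjective, then so is multiplication by a product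
of nonzero elements of `R`, and `R` is a domain. Conversely, a nonzerodivisor `a ∈ m` starts a
maximal regular sequence `a, bs`; for `c = a ^ n`, comparing the lengths of `R ⧸ (c, bs)` and of its
copy `c R ⧸ (c ^ 2, bs)` shows that each element of `H` killed by `(c, bs)` is a multiple of `c`.
-/

section ExtComparison

open CategoryTheory.Abelian HomologicalComplex Opposite

universe t v w

variable {R : Type t} [Ring R] {C : Type u} [Category.{v} C] [Abelian C] [Linear R C]

/-- Precomposition with a chain map, as a map of complexes of homomorphisms to `Y`. -/
noncomputable def linearYonedaObjMap {K L : ChainComplex C ℕ} (φ : K ⟶ L) (Y : C) :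
    L.linearYonedaObj R Y ⟶ K.linearYonedaObj R Y :=
  (unopFunctor (ModuleCat R) (ComplexShape.down ℕ)).map
    (((((linearYoneda R C).obj Y).rightOp.mapHomologicalComplex _).map φ).op)

lemma isoExt_inv_naturality [EnoughProjectives C] {X X' : C} (g : X' ⟶ X)
    (P : ProjectiveResolution X) (P' : ProjectiveResolution X')
    (φ : ProjectiveResolution.Hom P' P g) (n : ℕ) (Y : C) :
    (P.isoExt n Y).inv ≫ ((Ext R C n).map g.op).app Y =
      homologyMap (linearYonedaObjMap φ.hom Y) n ≫ (P'.isoExt n Y).inv := by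
  let F := ((linearYoneda R C).obj Y).rightOp
  have hderived := congrArg Quiver.Hom.unop <|
    ProjectiveResolution.isoLeftDerivedObj_hom_naturality g P' P φ.hom
      (by simpa using φ.hom_f_zero_comp_π_f_zero) F n
  have hunop := congrArg Quiver.Hom.unop <|
    homologyOp_hom_naturality (linearYonedaObjMap (R := R) φ.hom Y) n
  let e := ((P.complex.linearYonedaObj R Y).homologyOp n).hom.unop
  let e' := ((P'.complex.linearYonedaObj R Y).homologyOp n).hom.unop
  calc (e ≫ (P.isoLeftDerivedObj F n).hom.unop) ≫ ((F.leftDerived n).map g).unop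
      = e ≫ (homologyMap ((F.mapHomologicalComplex _).map φ.hom) n).unop ≫
          (P'.isoLeftDerivedObj F n).hom.unop :=
        (Category.assoc _ _ _).trans (congrArg (e ≫ ·) hderived)
    _ = homologyMap (linearYonedaObjMap φ.hom Y) n ≫ e' ≫ (P'.isoLeftDerivedObj F n).hom.unop :=
        (Category.assoc _ _ _).symm.trans
          ((congrArg (· ≫ (P'.isoLeftDerivedObj F n).hom.unop) hunop).trans
            (Category.assoc _ _ _))

lemma ker_homologyπ (K : CochainComplex (ModuleCat.{v} R) ℕ) (n : ℕ) :
    LinearMap.ker (K.homologyπ n).hom =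
      (LinearMap.range (K.d ((ComplexShape.up ℕ).prev n) n).hom).comap (K.iCycles n).hom := by
  have hexact := (ShortComplex.moduleCat_exact_iff_range_eq_ker _).1 <|
    ShortComplex.exact_of_g_is_cokernel (ShortComplex.mk _ _ (K.toCycles_comp_homologyπ _ n))
      (K.homologyIsCokernel _ n rfl)
  refine hexact.symm.trans (SetLike.ext fun c => exists_congr fun x => ?_)
  rw [← K.toCycles_i]
  exact ((ModuleCat.mono_iff_injective (K.iCycles n)).1 inferInstance).eq_iff.symm

lemma range_iCycles (K : CochainComplex (ModuleCat.{v} R) ℕ) (n : ℕ) :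
    LinearMap.range (K.iCycles n).hom = LinearMap.ker (K.d n (n + 1)).hom :=
  (ShortComplex.moduleCat_exact_iff_range_eq_ker _).1 <|
    ShortComplex.exact_of_f_is_kernel (ShortComplex.mk _ _ (K.iCycles_d n (n + 1)))
      (K.cyclesIsKernel n _ (by simp))

variable {X : C} (P : ProjectiveResolution X) (n : ℕ) (Y : C)

/-- The morphism underlying a cocycle of the complex of homomorphisms to `Y`. -/
noncomputable def cocycleHom :
    (P.complex.linearYonedaObj R Y).cycles n →ₗ[R] (P.complex.X n ⟶ Y) :=
  ((P.complex.linearYonedaObj R Y).iCycles n).hom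

lemma d_comp_cocycleHom (c : (P.complex.linearYonedaObj R Y).cycles n) :
    P.complex.d (n + 1) n ≫ cocycleHom P n Y c = 0 :=
  congrArg (·.hom c) ((P.complex.linearYonedaObj R Y).iCycles_d n (n + 1))

variable [HasExt.{w} C]

section

variable {n Y}

lemma extMk_congr {f g : P.complex.X n ⟶ Y} (h : f = g) (hf : P.complex.d (n + 1) n ≫ f = 0)
    (hg : P.complex.d (n + 1) n ≫ g = 0) :
    P.extMk f (n + 1) rfl hf = P.extMk g (n + 1) rfl hg := by
  subst h
  rfl

lemma extMk_zero_index_eq_zero_iff (f : P.complex.X 0 ⟶ Y) (hf : P.complex.d 1 0 ≫ f = 0) :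
    P.extMk f 1 rfl hf = 0 ↔ f = 0 := by
  refine ⟨fun h => ?_, fun h => (extMk_congr P h hf Limits.comp_zero).trans (P.extMk_zero 1 rfl)⟩
  have hcoboundary := P.extEquivCohomologyClass_extMk f 1 rfl hf
  rw [h, P.extEquivCohomologyClass_zero, eq_comm,
    CochainComplex.HomComplex.CohomologyClass.mk_eq_zero_iff,
    CochainComplex.HomComplex.Cocycle.toSingleMk_mem_coboundaries_iff _ _ _ _ _ 1 (by lia)]
    at hcoboundary
  obtain ⟨g, hg⟩ := hcoboundary
  have hd : P.cochainComplex.d (-(0 : ℕ)) 1 = 0 :=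
    (CochainComplex.isZero_of_isStrictlyLE P.cochainComplex 0 1).eq_of_tgt _ _
  rw [hd, Limits.zero_comp] at hg
  rw [← cancel_epi (P.cochainComplexXIso (-(0 : ℕ)) 0 rfl).hom, ← hg, Limits.comp_zero]

end

/-- The class in `Abelian.Ext` of a cocycle of the complex of homomorphisms to `Y`. -/
noncomputable def cyclesToExt :
    (P.complex.linearYonedaObj R Y).cycles n →ₗ[R] Abelian.Ext X Y n where
  toFun c := P.extMk (cocycleHom P n Y c) (n + 1) rfl (d_comp_cocycleHom P n Y c)
  map_add' a b := by
    rw [P.add_extMk]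
    exact extMk_congr P (map_add _ _ _) _ _
  map_smul' r a := by
    rw [RingHom.id_apply, Ext.smul_eq_comp_mk₀, P.extMk_comp_mk₀]
    refine extMk_congr P ?_ _ _
    rw [Linear.comp_smul, Category.comp_id, map_smul]

lemma cyclesToExt_apply (c : (P.complex.linearYonedaObj R Y).cycles n) :
    cyclesToExt P n Y c =
      P.extMk (cocycleHom P n Y c) (n + 1) rfl (d_comp_cocycleHom P n Y c) := rfl

lemma cyclesToExt_surjective : Function.Surjective (cyclesToExt (R := R) P n Y) := by
  intro α
  obtain ⟨f, hf, rfl⟩ := P.extMk_surjective α (n + 1) rfl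
  obtain ⟨c, hc⟩ := (range_iCycles (P.complex.linearYonedaObj R Y) n).ge (show f ∈ _ from hf)
  exact ⟨c, extMk_congr P hc (d_comp_cocycleHom P n Y c) hf⟩

lemma ker_cyclesToExt : LinearMap.ker (cyclesToExt P n Y) =
    LinearMap.ker ((P.complex.linearYonedaObj R Y).homologyπ n).hom := by
  ext c
  rw [ker_homologyπ, LinearMap.mem_ker, cyclesToExt_apply, Submodule.mem_comap]
  cases n with
  | zero =>
    rw [extMk_zero_index_eq_zero_iff, CochainComplex.prev_nat_zero,
      show (P.complex.linearYonedaObj R Y).d 0 0 = 0 from shape _ _ _ (by simp),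
      ModuleCat.hom_zero, LinearMap.range_zero, Submodule.mem_bot]
    rfl
  | succ p =>
    rw [P.extMk_eq_zero_iff _ _ _ _ p rfl, CochainComplex.prev_nat_succ]
    rfl

lemma cyclesToExt_cyclesMap {X' : C} {g : X' ⟶ X} {P' : ProjectiveResolution X'}
    (φ : ProjectiveResolution.Hom P' P g) (c : (P.complex.linearYonedaObj R Y).cycles n) :
    cyclesToExt P' n Y ((cyclesMap (linearYonedaObjMap φ.hom Y) n).hom c) =
      (Ext.mk₀ g).comp (cyclesToExt P n Y c) (zero_add n) := by
  have hcocycle : cocycleHom P' n Y ((cyclesMap (linearYonedaObjMap φ.hom Y) n).hom c) =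
      φ.hom.f n ≫ cocycleHom P n Y c :=
    congrArg (·.hom c) (cyclesMap_i (linearYonedaObjMap φ.hom Y) n)
  rw [cyclesToExt_apply P, ProjectiveResolution.mk₀_comp_extMk _ _ _ _ φ]
  exact extMk_congr P' hcocycle (d_comp_cocycleHom P' n Y _) _

/-- The cohomology of the complex of homomorphisms from a projective resolution, compared with
`Abelian.Ext`. -/
noncomputable def homologyEquivExt :
    (P.complex.linearYonedaObj R Y).homology n ≃ₗ[R] Abelian.Ext X Y n :=
  (LinearMap.quotKerEquivOfSurjective _
    ((ModuleCat.epi_iff_surjective ((P.complex.linearYonedaObj R Y).homologyπ n)).1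
      inferInstance)).symm ≪≫ₗ
  Submodule.quotEquivOfEq _ _ (ker_cyclesToExt P n Y).symm ≪≫ₗ
  LinearMap.quotKerEquivOfSurjective _ (cyclesToExt_surjective P n Y)

lemma homologyEquivExt_homologyπ (c : (P.complex.linearYonedaObj R Y).cycles n) :
    homologyEquivExt P n Y (((P.complex.linearYonedaObj R Y).homologyπ n).hom c) =
      cyclesToExt P n Y c := by
  simp only [homologyEquivExt, LinearEquiv.trans_apply,
    LinearMap.quotKerEquivOfSurjective_symm_apply]
  rfl

variable [EnoughProjectives C]

/-- The comparison of the left derived functor `Ext R C n` with `Abelian.Ext`. -/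
noncomputable def extFunctorEquiv :
    ((Ext R C n).obj (op X)).obj Y ≃ₗ[R] Abelian.Ext X Y n :=
  (P.isoExt n Y).toLinearEquiv ≪≫ₗ homologyEquivExt P n Y

lemma extFunctorEquiv_isoExt_inv_homologyπ (c : (P.complex.linearYonedaObj R Y).cycles n) :
    extFunctorEquiv P n Y
        ((P.isoExt n Y).inv.hom (((P.complex.linearYonedaObj R Y).homologyπ n).hom c)) =
      cyclesToExt P n Y c :=
  (congrArg (homologyEquivExt P n Y) ((P.isoExt n Y).toLinearEquiv.apply_symm_apply _)).trans
    (homologyEquivExt_homologyπ P n Y c)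

lemma extFunctorEquiv_naturality {X' : C} (g : X' ⟶ X) (P' : ProjectiveResolution X')
    (t : ((Ext R C n).obj (op X)).obj Y) :
    extFunctorEquiv P' n Y ((((Ext R C n).map g.op).app Y).hom t) =
      (Ext.mk₀ g).comp (extFunctorEquiv P n Y t) (zero_add n) := by
  let φ : ProjectiveResolution.Hom P' P g :=
    ⟨ProjectiveResolution.lift g P' P, by
      simpa using! ProjectiveResolution.lift_commutes_zero g P' P⟩
  let ψ := linearYonedaObjMap (R := R) φ.hom Y
  obtain ⟨c, hc⟩ := (ModuleCat.epi_iff_surjective ((P.complex.linearYonedaObj R Y).homologyπ n)).1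
    inferInstance ((P.isoExt n Y).toLinearEquiv t)
  have ht : t = (P.isoExt n Y).inv.hom (((P.complex.linearYonedaObj R Y).homologyπ n).hom c) :=
    (P.isoExt n Y).toLinearEquiv.eq_symm_apply.2 hc.symm
  have hclass : (((Ext R C n).map g.op).app Y).hom t =
      (P'.isoExt n Y).inv.hom (((P'.complex.linearYonedaObj R Y).homologyπ n).hom
        ((cyclesMap ψ n).hom c)) :=
    ht ▸ (LinearMap.congr_fun (congrArg ModuleCat.Hom.hom
      (isoExt_inv_naturality g P P' φ n Y)) _).trans
      (congrArg (P'.isoExt n Y).inv.hom (congrArg (·.hom c) (homologyπ_naturality ψ n)))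
  rw [hclass, extFunctorEquiv_isoExt_inv_homologyπ, cyclesToExt_cyclesMap P n Y φ, ht,
    extFunctorEquiv_isoExt_inv_homologyπ]

end ExtComparison

section ExtPrecomp

open CategoryTheory.Abelian

variable {R : Type u} [CommRing R] {N N' N'' : Type u} [AddCommGroup N] [Module R N]
  [AddCommGroup N'] [Module R N'] [AddCommGroup N''] [Module R N'']

/-- The contravariant action of linear maps `N' → N` on `Ext(-, M)`, as a bilinear map. -/
noncomputable def extPrecomp (M : ModuleCat.{u} R) (i : ℕ) :
    (N' →ₗ[R] N) →ₗ[R] Abelian.Ext (ModuleCat.of R N) M i →ₗ[R]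
      Abelian.Ext (ModuleCat.of R N') M i :=
  Ext.bilinearCompOfLinear R (ModuleCat.of R N') (ModuleCat.of R N) M 0 i i (zero_add i) ∘ₗ
    (Ext.linearEquiv₀ (R := R)).symm.toLinearMap ∘ₗ
    (ModuleCat.homLinearEquiv (S := R) (M := ModuleCat.of R N')
      (N := ModuleCat.of R N)).symm.toLinearMap

variable {M : ModuleCat.{u} R} {i : ℕ}

lemma extPrecomp_id (t : Abelian.Ext (ModuleCat.of R N) M i) :
    extPrecomp M i LinearMap.id t = t :=
  Ext.mk₀_id_comp t

lemma extPrecomp_comp (p : N' →ₗ[R] N) (q : N'' →ₗ[R] N')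
    (t : Abelian.Ext (ModuleCat.of R N) M i) :
    extPrecomp M i (p ∘ₗ q) t = extPrecomp M i q (extPrecomp M i p t) :=
  (Ext.mk₀_comp_mk₀_assoc (ModuleCat.ofHom q) (ModuleCat.ofHom p) t).symm

lemma smul_ext_eq_zero_of_mem_annihilator {r : R} (hr : r ∈ Module.annihilator R N)
    (t : Abelian.Ext (ModuleCat.of R N) M i) : r • t = 0 := by
  have hzero : r • (LinearMap.id : N →ₗ[R] N) = 0 :=
    LinearMap.ext (Module.mem_annihilator.mp hr)
  rw [← extPrecomp_id t, ← LinearMap.smul_apply, ← map_smul, hzero, map_zero,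
    LinearMap.zero_apply]

end ExtPrecomp

section LocalCohomologyColimit

open CategoryTheory.Abelian CategoryTheory.Limits Opposite

variable {R : Type u} [CommRing R] (J : Ideal R) (i : ℕ) (M : ModuleCat.{u} R)

/-- The direct system `k ↦ Ext R (ModuleCat R) i (R ⧸ J ^ k) M` defining local cohomology. -/
noncomputable def localCohomologySystem : ℕᵒᵖᵒᵖ ⥤ ModuleCat.{u} R :=
  localCohomology.diagram (localCohomology.idealPowersDiagram J) i ⋙
    (evaluation (ModuleCat.{u} R) (ModuleCat.{u} R)).obj M

/-- Local cohomology as a cocone under its defining direct system. -/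
noncomputable def localCohomologyCocone : Cocone (localCohomologySystem J i M) :=
  have := localCohomology.hasColimitDiagram.{u, 0} (localCohomology.idealPowersDiagram J) i
  ((evaluation (ModuleCat.{u} R) (ModuleCat.{u} R)).obj M).mapCocone
    (colimit.cocone (localCohomology.diagram (localCohomology.idealPowersDiagram J) i))

/-- Evaluation at `M` preserves the colimit of functors defining local cohomology. -/
noncomputable def isColimitLocalCohomologyCocone : IsColimit (localCohomologyCocone J i M) :=
  have := localCohomology.hasColimitDiagram.{u, 0} (localCohomology.idealPowersDiagram J) i
  isColimitOfPreserves _ (colimit.isColimit _)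

instance preservesColimit_forget_localCohomologySystem :
    PreservesColimit (localCohomologySystem J i M) (forget (ModuleCat.{u} R)) :=
  have : PreservesFilteredColimitsOfSize.{0, 0} (forget (ModuleCat.{u} R)) :=
    preservesSmallestFilteredColimits_of_preservesFilteredColimits _
  inferInstance

/-- The terms of the direct system defining local cohomology, in terms of `Abelian.Ext`. -/
noncomputable def localCohomologySystemEquiv (k : ℕ) :
    (localCohomologySystem J i M).obj (op (op k)) ≃ₗ[R]
      Abelian.Ext (ModuleCat.of R (R ⧸ J ^ k)) M i :=
  extFunctorEquiv (projectiveResolution (ModuleCat.of R (R ⧸ J ^ k))) i M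

/-- The canonical map from `Ext^i(R ⧸ J ^ k, M)` to local cohomology. -/
noncomputable def extToLocalCohomology (k : ℕ) :
    Abelian.Ext (ModuleCat.of R (R ⧸ J ^ k)) M i →ₗ[R] (localCohomology J i).obj M :=
  ((localCohomologyCocone J i M).ι.app (op (op k))).hom ∘ₗ
    (localCohomologySystemEquiv J i M k).symm.toLinearMap

variable {J i M}

lemma extToLocalCohomology_localCohomologySystemEquiv {k : ℕ}
    (t : (localCohomologySystem J i M).obj (op (op k))) :
    extToLocalCohomology J i M k (localCohomologySystemEquiv J i M k t) =
      ((localCohomologyCocone J i M).ι.app (op (op k))).hom t :=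
  congrArg _ (LinearEquiv.symm_apply_apply _ t)

lemma localCohomologySystemEquiv_map {k l : ℕ} (h : k ≤ l) (f : op (op k) ⟶ op (op l))
    (t : (localCohomologySystem J i M).obj (op (op k))) :
    localCohomologySystemEquiv J i M l (((localCohomologySystem J i M).map f).hom t) =
      extPrecomp M i (Submodule.factor (Ideal.pow_le_pow_right h : J ^ l ≤ J ^ k))
        (localCohomologySystemEquiv J i M k t) :=
  extFunctorEquiv_naturality _ i M
    (ModuleCat.ofHom (Submodule.factor (Ideal.pow_le_pow_right h : J ^ l ≤ J ^ k))) _ t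

lemma extToLocalCohomology_extPrecomp_factor {k l : ℕ} (h : k ≤ l)
    (t : Abelian.Ext (ModuleCat.of R (R ⧸ J ^ k)) M i) :
    extToLocalCohomology J i M l
        (extPrecomp M i (Submodule.factor (Ideal.pow_le_pow_right h)) t) =
      extToLocalCohomology J i M k t := by
  obtain ⟨t, rfl⟩ := (localCohomologySystemEquiv J i M k).surjective t
  let f : op (op k) ⟶ op (op l) := (homOfLE h).op.op
  rw [← localCohomologySystemEquiv_map h f, extToLocalCohomology_localCohomologySystemEquiv,
    extToLocalCohomology_localCohomologySystemEquiv]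
  exact LinearMap.congr_fun (congrArg ModuleCat.Hom.hom ((localCohomologyCocone J i M).w f)) t

lemma exists_extToLocalCohomology_eq (x : (localCohomology J i).obj M) :
    ∃ k t, extToLocalCohomology J i M k t = x := by
  obtain ⟨k, t, rfl⟩ := Concrete.isColimit_exists_rep _ (isColimitLocalCohomologyCocone J i M) x
  exact ⟨k.unop.unop, localCohomologySystemEquiv J i M _ t,
    extToLocalCohomology_localCohomologySystemEquiv t⟩

lemma exists_extPrecomp_factor_eq_zero {k : ℕ}
    {t : Abelian.Ext (ModuleCat.of R (R ⧸ J ^ k)) M i} (ht : extToLocalCohomology J i M k t = 0) :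
    ∃ (l : ℕ) (h : k ≤ l),
      extPrecomp M i (Submodule.factor (Ideal.pow_le_pow_right h : J ^ l ≤ J ^ k)) t = 0 := by
  obtain ⟨t, rfl⟩ := (localCohomologySystemEquiv J i M k).surjective t
  rw [extToLocalCohomology_localCohomologySystemEquiv] at ht
  obtain ⟨l, f, g, hfg⟩ := Concrete.isColimit_exists_of_rep_eq _
    (isColimitLocalCohomologyCocone J i M) (j := op (op k)) t 0
    (ht.trans (map_zero _).symm)
  have h : k ≤ l.unop.unop := leOfHom f.unop.unop
  refine ⟨l.unop.unop, h, ?_⟩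
  rw [← localCohomologySystemEquiv_map h f, LinearEquiv.map_eq_zero_iff]
  exact hfg.trans (map_zero _)

lemma exists_mem_torsionBySet_pow (x : (localCohomology J i).obj M) :
    ∃ k : ℕ, x ∈ Submodule.torsionBySet R ((localCohomology J i).obj M) (J ^ k : Ideal R) := by
  obtain ⟨k, t, rfl⟩ := exists_extToLocalCohomology_eq x
  refine ⟨k, (Submodule.mem_torsionBySet_iff _ _).mpr fun r => ?_⟩
  have hr : (r : R) ∈ Module.annihilator R (R ⧸ J ^ k) := Ideal.annihilator_quotient.ge r.2
  change (r : R) • _ = _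
  rw [← map_smul, smul_ext_eq_zero_of_mem_annihilator hr, map_zero]

end LocalCohomologyColimit

section Grade

open CategoryTheory.Abelian RingTheory.Sequence PrimeSpectrum

variable {R : Type u} [CommRing R] {J : Ideal R} {M : ModuleCat.{u} R} {n : ℕ}

/-- The grade of `J` on `M` is at least `n`, by Rees's criterion: `Ext^i(N, M)` vanishes for all
`i < n` and all finite modules `N` supported in `V(J)`. -/
def GradeGE (J : Ideal R) (M : ModuleCat.{u} R) (n : ℕ) : Prop :=
  ∀ (N : Type u) [AddCommGroup N] [Module R N] [Module.Finite R N],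
    Module.support R N ⊆ zeroLocus J → ∀ i < n, Subsingleton (Abelian.Ext (ModuleCat.of R N) M i)

lemma gradeGE_length_of_isRegular [IsNoetherianRing R] [Module.Finite R M] {rs : List R}
    (hrs : IsRegular M rs) (hJ : Ideal.ofList rs ≤ J) (hM : J • (⊤ : Submodule R M) ≠ ⊤) :
    GradeGE J M rs.length := fun N _ _ _ hN =>
  ModuleCat.subsingleton_ext_of_exists_isRegular J (ModuleCat.of R N) hN M hM.lt_top rs
    (fun _ hr => hJ (Ideal.subset_span hr)) hrs

lemma GradeGE.quotSMulTop {r : R} (h : GradeGE J M (n + 1)) (hr : IsSMulRegular M r) :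
    GradeGE J (ModuleCat.of R (QuotSMulTop r M)) n := fun N _ _ _ hN i hi => by
  refine subsingleton_of_forall_eq 0 fun x => ?_
  obtain ⟨z, rfl⟩ := Ext.covariant_sequence_exact₃ (ModuleCat.of R N)
    hr.smulShortComplex_shortExact x rfl ((h N hN (i + 1) (by lia)).elim _ _)
  obtain rfl : z = 0 := (h N hN i (by lia)).elim _ _
  exact Ext.zero_comp _ _ _ _ _

section Descent

variable [IsNoetherianRing R] {N N' : Type u} [AddCommGroup N] [Module R N]
  [AddCommGroup N'] [Module R N'] [Module.Finite R N'] {p : N' →ₗ[R] N}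

lemma GradeGE.extPrecomp_injective (h : GradeGE J M n) (hN' : Module.support R N' ⊆ zeroLocus J)
    (hp : Function.Surjective p) : Function.Injective (extPrecomp M n p) := by
  refine (injective_iff_map_eq_zero _).mpr fun t ht => ?_
  cases n with
  | zero =>
    obtain ⟨g, rfl⟩ := (Ext.linearEquiv₀ (R := R)).symm.surjective t
    have hpg : ModuleCat.ofHom p ≫ g = 0 :=
      (Ext.linearEquiv₀ (R := R)).symm.injective
        ((Ext.mk₀_comp_mk₀ _ _).symm.trans (ht.trans (map_zero _).symm))
    have : Epi (ModuleCat.ofHom p) := (ModuleCat.epi_iff_surjective _).mpr hp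
    rw [(cancel_epi (ModuleCat.ofHom p)).mp (hpg.trans Limits.comp_zero.symm), map_zero]
  | succ i =>
    have hvanish := h (LinearMap.ker p)
      ((Module.support_subset_of_injective _ (LinearMap.ker p).injective_subtype).trans hN')
      i i.lt_succ_self
    obtain ⟨x, rfl⟩ := Ext.contravariant_sequence_exact₃
      (LinearMap.shortExact_shortComplexKer hp) M t ht (add_comm 1 i)
    obtain rfl : x = 0 := hvanish.elim _ _
    exact Ext.comp_zero _ _ _ _ _

/-- If `y₁, …, yₘ` generate `I`, then `(N')ᵐ → ker p`, `x ↦ ∑ yⱼ xⱼ`, is onto, so a class killed by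
the `yⱼ` dies on `ker p`. -/
lemma GradeGE.exists_extPrecomp_eq (h : GradeGE J M n)
    (hN' : Module.support R N' ⊆ zeroLocus J) (hp : Function.Surjective p) {I : Ideal R}
    (hker : LinearMap.ker p = I • ⊤) {t : Abelian.Ext (ModuleCat.of R N') M n}
    (ht : ∀ r ∈ I, r • t = 0) : ∃ s, extPrecomp M n p s = t := by
  obtain ⟨m, y, rfl⟩ := Submodule.fg_iff_exists_fin_generating_family.mp (IsNoetherian.noetherian I)
  let σ : (Fin m →₀ N') →ₗ[R] N' := Finsupp.lsum R fun j => y j • LinearMap.id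
  have hσ : LinearMap.range σ = LinearMap.ker p := by
    rw [Submodule.range_lsum_smul, LinearMap.range_id, hker, Submodule.span_smul_eq]
  let φ : (Fin m →₀ N') →ₗ[R] LinearMap.ker p :=
    σ.codRestrict _ fun x => hσ.le (LinearMap.mem_range_self σ x)
  have hφ : Function.Surjective φ := fun z =>
    (hσ.ge z.2).imp fun x hx => Subtype.ext hx
  have hsupport : Module.support R (Fin m →₀ N') ⊆ zeroLocus J := by
    refine Set.Subset.trans ?_ hN'
    rw [Module.support_eq_zeroLocus, Module.support_eq_zeroLocus]
    refine zeroLocus_anti_mono fun r hr => Module.mem_annihilator.mpr fun x => ?_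
    exact Finsupp.ext fun j => Module.mem_annihilator.mp hr (x j)
  have hzero : extPrecomp M n (LinearMap.ker p).subtype t = 0 := by
    apply h.extPrecomp_injective hsupport hφ
    have hsum : σ = ∑ j, y j • Finsupp.lapply j := by
      ext; simp [σ, Finsupp.single_apply]
    rw [map_zero, ← extPrecomp_comp, LinearMap.subtype_comp_codRestrict, hsum, map_sum,
      LinearMap.sum_apply]
    refine Finset.sum_eq_zero fun j _ => ?_
    rw [map_smul, LinearMap.smul_apply, ← map_smul, ht _ (Submodule.subset_span ⟨j, rfl⟩),
      map_zero]
  exact Ext.contravariant_sequence_exact₂ (LinearMap.shortExact_shortComplexKer hp) M t hzero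

end Descent

end Grade

section TorsionOfLocalCohomology

open CategoryTheory.Abelian PrimeSpectrum

variable {R : Type u} [CommRing R] [IsNoetherianRing R] {I J : Ideal R} {M : ModuleCat.{u} R}
  {n k : ℕ}

lemma ker_factor_eq_smul_top {R : Type*} [CommRing R] {I K : Ideal R} (h : K ≤ I) :
    LinearMap.ker (Submodule.factor h) = I • (⊤ : Submodule R (R ⧸ K)) := by
  rw [Submodule.factor, Submodule.ker_mapQ, Submodule.comap_id, ← Submodule.range_mkQ K,
    ← Submodule.map_top, ← Submodule.map_smul'', smul_eq_mul, Ideal.mul_top]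

lemma support_quotient_subset_zeroLocus {R : Type*} [CommRing R] {I J : Ideal R} {k : ℕ}
    (h : J ^ k ≤ I) : Module.support R (R ⧸ I) ⊆ zeroLocus J := by
  rw [Module.support_eq_zeroLocus, Ideal.annihilator_quotient]
  intro x hx
  exact x.2.le_of_pow_le (h.trans hx)

lemma GradeGE.extToLocalCohomology_injective (h : GradeGE J M n) (k : ℕ) :
    Function.Injective (extToLocalCohomology J n M k) := by
  refine (injective_iff_map_eq_zero _).mpr fun t ht => ?_
  obtain ⟨l, hkl, hzero⟩ := exists_extPrecomp_factor_eq_zero ht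
  exact (map_eq_zero_iff _ <| h.extPrecomp_injective (support_quotient_subset_zeroLocus le_rfl)
    (Submodule.factor_surjective _)).mp hzero

lemma GradeGE.range_extToLocalCohomology_comp (h : GradeGE J M n) (hk : J ^ k ≤ I) :
    LinearMap.range (extToLocalCohomology J n M k ∘ₗ extPrecomp M n (Submodule.factor hk)) =
      Submodule.torsionBySet R ((localCohomology J n).obj M) I := by
  refine le_antisymm ?_ fun x hx => ?_
  · rintro _ ⟨t, rfl⟩
    refine (Submodule.mem_torsionBySet_iff _ _).mpr fun r => ?_
    have hr : (r : R) ∈ Module.annihilator R (R ⧸ I) := Ideal.annihilator_quotient.ge r.2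
    change (r : R) • _ = _
    rw [← map_smul, smul_ext_eq_zero_of_mem_annihilator hr, map_zero]
  obtain ⟨l, hkl, s, rfl⟩ : ∃ l, k ≤ l ∧ ∃ s, extToLocalCohomology J n M l s = x := by
    obtain ⟨l, s, rfl⟩ := exists_extToLocalCohomology_eq x
    exact ⟨max k l, le_max_left k l, _,
      extToLocalCohomology_extPrecomp_factor (le_max_right k l) s⟩
  have hI : J ^ l ≤ I := (Ideal.pow_le_pow_right hkl).trans hk
  have hs : ∀ r ∈ I, r • s = 0 := fun r hr => by
    apply h.extToLocalCohomology_injective l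
    rw [map_smul, map_zero]
    exact (Submodule.mem_torsionBySet_iff _ _).mp hx ⟨r, hr⟩
  obtain ⟨t, rfl⟩ := h.exists_extPrecomp_eq (support_quotient_subset_zeroLocus le_rfl)
    (Submodule.factor_surjective hI) (ker_factor_eq_smul_top hI) hs
  refine ⟨t, ?_⟩
  rw [LinearMap.comp_apply, ← extToLocalCohomology_extPrecomp_factor hkl, ← extPrecomp_comp,
    Submodule.factor_comp]

/-- If `grade(J, M) ≥ n` and `I` contains a power of `J`, then `(0 :_{H^n_J(M)} I)` is
`Ext^n(R ⧸ I, M)`. -/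
noncomputable def GradeGE.torsionLocalCohomologyEquiv (h : GradeGE J M n) (hk : J ^ k ≤ I) :
    Submodule.torsionBySet R ((localCohomology J n).obj M) I ≃ₗ[R]
      Abelian.Ext (ModuleCat.of R (R ⧸ I)) M n :=
  have hinj := (h.extToLocalCohomology_injective k).comp
    (h.extPrecomp_injective (support_quotient_subset_zeroLocus le_rfl)
      (Submodule.factor_surjective hk))
  (LinearEquiv.ofEq _ _ (h.range_extToLocalCohomology_comp hk).symm).trans
    (LinearEquiv.ofInjective
      (extToLocalCohomology J n M k ∘ₗ extPrecomp M n (Submodule.factor hk)) hinj).symm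

end TorsionOfLocalCohomology

section ReesIsomorphism

open CategoryTheory.Abelian RingTheory.Sequence PrimeSpectrum

variable {R : Type u} [CommRing R] [IsNoetherianRing R] {N : Type u} [AddCommGroup N] [Module R N]
  [Module.Finite R N]

lemma extClass_postcomp_bijective {M : ModuleCat.{u} R} [Module.Finite R M] {r : R} {rs : List R}
    (hM : IsRegular M (r :: rs)) (hN : Ideal.ofList (r :: rs) ≤ Module.annihilator R N) :
    Function.Bijective (Ext.postcompOfLinear
      ((isRegular_cons_iff _ _ _).mp hM).1.smulShortComplex_shortExact.extClass R
      (ModuleCat.of R N) (rfl : rs.length + 1 = rs.length + 1)) := by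
  have hr := ((isRegular_cons_iff _ _ _).mp hM).1
  have hsupport : Module.support R N ⊆ zeroLocus (Ideal.ofList (r :: rs)) := by
    rw [Module.support_eq_zeroLocus]
    exact zeroLocus_anti_mono hN
  refine ⟨(injective_iff_map_eq_zero _).mpr fun y hy => ?_, fun x => ?_⟩
  · obtain ⟨z, rfl⟩ := Ext.covariant_sequence_exact₃ (ModuleCat.of R N)
      hr.smulShortComplex_shortExact y rfl hy
    obtain rfl : z = 0 := (gradeGE_length_of_isRegular hM le_rfl hM.top_ne_smul.symm N hsupport
      rs.length rs.length.lt_succ_self).elim _ _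
    exact Ext.zero_comp _ _ _ _ _
  · have hrx : r • x = 0 :=
      smul_ext_eq_zero_of_mem_annihilator (hN (Ideal.subset_span List.mem_cons_self)) x
    exact Ext.covariant_sequence_exact₁ (ModuleCat.of R N) hr.smulShortComplex_shortExact x
      ((Ext.smul_eq_comp_mk₀ x r).symm.trans hrx) rfl

lemma nonempty_extEquiv_linearMap_quotient {M : ModuleCat.{u} R} [Module.Finite R M] {rs : List R}
    (hM : IsRegular M rs) (hN : Ideal.ofList rs ≤ Module.annihilator R N) :
    Nonempty (Abelian.Ext (ModuleCat.of R N) M rs.length ≃ₗ[R]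
      (N →ₗ[R] M ⧸ (Ideal.ofList rs • ⊤ : Submodule R M))) := by
  induction rs generalizing M with
  | nil =>
    have hbot : (Ideal.ofList ([] : List R) • ⊤ : Submodule R M) = ⊥ := by
      rw [Ideal.ofList_nil, Submodule.bot_smul]
    exact ⟨Ext.linearEquiv₀ (R := R) ≪≫ₗ ModuleCat.homLinearEquiv (S := R) ≪≫ₗ
      LinearEquiv.congrRight (Submodule.quotEquivOfEqBot _ hbot).symm⟩
  | cons r rs ih =>
    obtain ⟨e⟩ := ih (M := ModuleCat.of R (QuotSMulTop r M)) ((isRegular_cons_iff _ _ _).mp hM).2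
      (le_trans (by rw [Ideal.ofList_cons]; exact le_sup_right) hN)
    exact ⟨(LinearEquiv.ofBijective _ (extClass_postcomp_bijective hM hN)).symm ≪≫ₗ e ≪≫ₗ
      LinearEquiv.congrRight (Submodule.quotOfListConsSMulTopEquivQuotSMulTopInner M r rs).symm⟩

lemma nonempty_extEquiv_quotient_ofList {rs : List R} (hrs : IsRegular R rs) :
    Nonempty (Abelian.Ext (ModuleCat.of R (R ⧸ Ideal.ofList rs)) (ModuleCat.of R R) rs.length ≃ₗ[R]
      R ⧸ Ideal.ofList rs) := by
  obtain ⟨e⟩ := nonempty_extEquiv_linearMap_quotient (M := ModuleCat.of R R) hrs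
    (Ideal.annihilator_quotient (I := Ideal.ofList rs)).ge
  let target : (R ⧸ (Ideal.ofList rs • ⊤ : Ideal R)) ≃ₗ[R] R ⧸ Ideal.ofList rs :=
    Submodule.quotEquivOfEq _ _ (Ideal.mul_top _)
  let scalars : (R ⧸ Ideal.ofList rs →ₗ[R] R ⧸ Ideal.ofList rs) ≃ₗ[R]
      (R ⧸ Ideal.ofList rs →ₗ[R ⧸ Ideal.ofList rs] R ⧸ Ideal.ofList rs) :=
    LinearMap.extendScalarsOfSurjectiveEquiv Ideal.Quotient.mk_surjective
  exact ⟨e ≪≫ₗ target.congrRight ≪≫ₗ scalars ≪≫ₗ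
    LinearMap.ringLmapEquivSelf (R ⧸ Ideal.ofList rs) R (R ⧸ Ideal.ofList rs)⟩

end ReesIsomorphism

section LocalRegularSequences

open RingTheory.Sequence

lemma ofList_map_pow_le {R : Type*} [CommRing R] {J : Ideal R} {rs : List R}
    (hJ : Ideal.ofList rs ≤ J) (n : ℕ) : Ideal.ofList (rs.map (· ^ n)) ≤ J ^ n := by
  refine Ideal.span_le.mpr fun x hx => ?_
  obtain ⟨r, hr, rfl⟩ := List.mem_map.mp hx
  exact Ideal.pow_mem_pow (hJ (Ideal.subset_span hr)) n

lemma antitone_ofList_map_pow {R : Type*} [CommRing R] (rs : List R) :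
    Antitone fun n : ℕ => Ideal.ofList (rs.map (· ^ n)) := fun n m h => by
  refine Ideal.span_le.mpr fun x hx => ?_
  obtain ⟨r, hr, rfl⟩ := List.mem_map.mp hx
  exact Ideal.mem_of_dvd _ (pow_dvd_pow r h) (Ideal.subset_span (List.mem_map_of_mem hr))

variable {R : Type*} [CommRing R] [IsLocalRing R]

section Module

variable {M : Type*} [AddCommGroup M] [Module R M] {r : R} {rs ss : List R}

lemma ofList_le_maximalIdeal_of_isRegular (h : IsRegular M rs) :
    Ideal.ofList rs ≤ maximalIdeal R :=
  le_maximalIdeal fun htop => h.top_ne_smul (by rw [htop, Submodule.top_smul])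

variable [IsNoetherian R M]

lemma isSMulRegular_quotient_of_isRegular_cons (h : IsRegular M (r :: rs)) :
    IsSMulRegular (M ⧸ (Ideal.ofList rs • ⊤ : Submodule R M)) r := by
  have hperm := isRegular_of_perm h (List.perm_append_singleton r rs).symm
  exact (isWeaklyRegular_singleton_iff _ _).mp
    ((isWeaklyRegular_append_iff M rs [r]).mp hperm.toIsWeaklyRegular).2

lemma isRegular_pow_cons (h : IsRegular M (r :: rs)) (n : ℕ) :
    IsRegular M (r ^ (n + 1) :: rs) := by
  have hM : Nontrivial M := h.nontrivial
  have hrs : IsWeaklyRegular M rs :=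
    ((isWeaklyRegular_append_iff M rs [r]).mp
      (isRegular_of_perm h (List.perm_append_singleton r rs).symm).toIsWeaklyRegular).1
  have hpow := (isWeaklyRegular_singleton_iff _ _).mpr
    ((isSMulRegular_quotient_of_isRegular_cons h).pow (n + 1))
  have hmem := ofList_le_maximalIdeal_of_isRegular h
  refine isRegular_of_perm (IsRegular.of_isWeaklyRegular_of_mem_maximalIdeal M ?_
    ((isWeaklyRegular_append_iff M rs [r ^ (n + 1)]).mpr ⟨hrs, hpow⟩))
    (List.perm_append_singleton _ rs)
  intro x hx
  rcases List.mem_append.mp hx with hx | hx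
  · exact hmem (Ideal.subset_span (List.mem_cons_of_mem r hx))
  · rw [List.mem_singleton.mp hx]
    exact Ideal.pow_mem_of_mem _ (hmem (Ideal.subset_span List.mem_cons_self)) _ n.succ_pos

lemma isRegular_map_pow_append (h : IsRegular M (rs ++ ss)) (n : ℕ) :
    IsRegular M (rs.map (· ^ (n + 1)) ++ ss) := by
  induction rs generalizing ss with
  | nil => exact h
  | cons r rs ih =>
    exact isRegular_of_perm (ih (isRegular_of_perm (isRegular_pow_cons h n)
      List.perm_middle.symm)) List.perm_middle

lemma isRegular_map_pow (h : IsRegular M rs) (n : ℕ) : IsRegular M (rs.map (· ^ (n + 1))) := by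
  rw [← List.append_nil rs] at h
  simpa only [List.append_nil] using isRegular_map_pow_append h n

end Module

variable [IsNoetherianRing R]

/-- Cancel `c` in `r * c - s * c ^ 2 ∈ (bs)`, as `c` is regular modulo `bs`. -/
lemma mul_mem_ofList_sq_cons_iff {c : R} {bs : List R} (h : IsRegular R (c :: bs)) (r : R) :
    r * c ∈ Ideal.ofList (c ^ 2 :: bs) ↔ r ∈ Ideal.ofList (c :: bs) := by
  have hreg := isSMulRegular_quotient_of_isRegular_cons h
  rw [isSMulRegular_quotient_iff_mem_of_smul_mem, smul_eq_mul, Ideal.mul_top] at hreg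
  simp only [Ideal.ofList_cons, Ideal.mem_span_singleton_sup]
  constructor
  · rintro ⟨s, b, hb, hsb⟩
    refine ⟨s, r - s * c, hreg _ ?_, by ring⟩
    rwa [smul_eq_mul, show c * (r - s * c) = b by linear_combination -hsb]
  · rintro ⟨s, b, hb, rfl⟩
    exact ⟨s, b * c, Ideal.mul_mem_right c _ hb, by ring⟩

lemma isArtinianRing_quotient_ofList {rs : List R} (hrs : IsRegular R rs)
    (hdim : ringKrullDim R = rs.length) : IsArtinianRing (R ⧸ Ideal.ofList rs) := by
  have hzero : ringKrullDim (R ⧸ Ideal.ofList rs) = (0 : ℕ) :=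
    ENat.WithBot.add_natCast_cancel.mp <|
      (ringKrullDim_add_length_eq_ringKrullDim_of_isRegular rs hrs).trans <|
        hdim.trans (zero_add _).symm
  exact isArtinianRing_iff_isNoetherianRing_krullDimLE_zero.mpr
    ⟨inferInstance, Ring.krullDimLE_iff.mpr hzero.le⟩

end LocalRegularSequences

section RegularExtension

open RingTheory.Sequence CategoryTheory.Abelian

variable {R : Type u} [CommRing R] [IsLocalRing R] [IsNoetherianRing R]

lemma GradeGE.exists_isRegular_cons {M : ModuleCat.{u} R} [Module.Finite R M] [Nontrivial M]
    {n : ℕ} (h : GradeGE (maximalIdeal R) M (n + 1)) {a : R} (ha : a ∈ maximalIdeal R)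
    (hreg : IsSMulRegular M a) : ∃ ys : List R, ys.length = n ∧ IsRegular M (a :: ys) := by
  have := nontrivial_quotSMulTop_of_mem_maximalIdeal M ha
  have hne : maximalIdeal R • (⊤ : Submodule R (QuotSMulTop a M)) ≠ ⊤ :=
    (Submodule.top_ne_ideal_smul_of_le_jacobson_annihilator (maximalIdeal_le_jacobson _)).symm
  have hsupport : Module.support R (R ⧸ maximalIdeal R) =
      PrimeSpectrum.zeroLocus (maximalIdeal R) := by
    rw [Module.support_eq_zeroLocus, Ideal.annihilator_quotient]
  obtain ⟨ys, hlen, -, hys⟩ := ModuleCat.exists_isRegular_of_exists_subsingleton_ext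
    (maximalIdeal R) n (ModuleCat.of R (QuotSMulTop a M)) hne.lt_top
    (ModuleCat.of R (R ⧸ maximalIdeal R)) hsupport
    (h.quotSMulTop hreg _ hsupport.subset)
  exact ⟨ys, hlen, (isRegular_cons_iff M a ys).mpr ⟨hreg, hys⟩⟩

end RegularExtension

section Endomorphisms

open Submodule

variable {R H : Type*} [CommRing R] [AddCommGroup H] [Module R H] {J : Ideal R}

lemma exists_end_eq_smul_of_equiv_quotient {I : Ideal R} (e : H ≃ₗ[R] R ⧸ I) (f : H →ₗ[R] H) :
    ∃ a : R, ∀ x, f x = a • x := by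
  obtain ⟨a, ha⟩ := Ideal.Quotient.mk_surjective (e (f (e.symm 1)))
  have hconj : e.toLinearMap ∘ₗ f ∘ₗ e.symm.toLinearMap = a • LinearMap.id := by
    refine linearMap_qext _ (LinearMap.ext_ring (ha.symm.trans ?_))
    exact congrArg (Ideal.Quotient.mk I) (mul_one a).symm
  refine ⟨a, fun x => e.injective ?_⟩
  simpa using LinearMap.congr_fun hconj (e x)

/-- On each `(0 :_H Iₙ) ≃ R ⧸ Iₙ` an endomorphism is a scalar `aₙ`; these scalars form a Cauchy
sequence. -/
lemma exists_end_eq_smul_of_torsionBySet_equiv [IsPrecomplete J R] {I : ℕ → Ideal R}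
    (hI : Antitone I) (hIJ : ∀ n, I n ≤ J ^ n)
    (e : ∀ n, Nonempty (torsionBySet R H (I n) ≃ₗ[R] R ⧸ I n))
    (hH : ∀ h : H, ∃ k : ℕ, h ∈ torsionBySet R H (J ^ k : Ideal R)) (f : H →ₗ[R] H) :
    ∃ a : R, ∀ h, f h = a • h := by
  have hstable (n : ℕ) : ∀ h ∈ torsionBySet R H (I n), f h ∈ torsionBySet R H (I n) :=
    fun h hh => (mem_torsionBySet_iff _ _).mpr fun r => by
      rw [← LinearMap.map_smul_of_tower, (mem_torsionBySet_iff _ _).mp hh r, map_zero]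
  choose a ha using fun n =>
    exists_end_eq_smul_of_equiv_quotient (e n).some (f.restrict (hstable n))
  have hfa (n : ℕ) (h : H) (hh : h ∈ torsionBySet R H (I n)) : f h = a n • h :=
    congrArg Subtype.val (ha n ⟨h, hh⟩)
  have hcauchy {m n : ℕ} (hmn : m ≤ n) : a m - a n ∈ I m := by
    rw [← Ideal.annihilator_quotient (I := I m), ← (e m).some.annihilator_eq,
      Module.mem_annihilator]
    intro h
    refine Subtype.ext ?_
    have hn := torsionBySet_le_torsionBySet_of_subset (hI hmn) h.2
    change (a m - a n) • (h : H) = 0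
    rw [sub_smul, ← hfa m h h.2, ← hfa n h hn, sub_self]
  obtain ⟨b, hb⟩ := IsPrecomplete.prec (I := J) inferInstance (f := a) fun {m n} hmn => by
    rw [SModEq.sub_mem, smul_eq_mul, Ideal.mul_top]
    exact hIJ m (hcauchy hmn)
  refine ⟨b, fun h => ?_⟩
  obtain ⟨k, hk⟩ := hH h
  have hab : a k - b ∈ J ^ k := by
    simpa only [SModEq.sub_mem, smul_eq_mul, Ideal.mul_top] using hb k
  rw [hfa k h (torsionBySet_le_torsionBySet_of_subset (hIJ k) hk), ← sub_eq_zero, ← sub_smul]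
  exact (mem_torsionBySet_iff _ _).mp hk ⟨_, hab⟩

lemma faithfulSMul_of_torsionBySet_equiv [IsHausdorff J R] {I : ℕ → Ideal R}
    (hIJ : ∀ n, I n ≤ J ^ n) (e : ∀ n, Nonempty (torsionBySet R H (I n) ≃ₗ[R] R ⧸ I n)) :
    FaithfulSMul R H := by
  refine Module.annihilator_eq_bot.mp (eq_bot_iff.mpr fun r hr => ?_)
  refine IsHausdorff.haus (I := J) inferInstance r fun n => ?_
  rw [SModEq.zero, smul_eq_mul, Ideal.mul_top]
  apply hIJ n
  rw [← Ideal.annihilator_quotient (I := I n), ← (e n).some.annihilator_eq]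
  exact LinearMap.annihilator_le_of_injective _ (subtype_injective (torsionBySet R H (I n))) hr

/-- Multiplication by `c` embeds `R ⧸ I` in `R ⧸ I' ≃ (0 :_H I')`, with image in
`(0 :_H I) ≃ R ⧸ I`; by the Artinian property it is all of `(0 :_H I)`. -/
lemma torsionBySet_le_range_lsmul {I I' : Ideal R} [IsArtinianRing (R ⧸ I)] {c : R}
    (hc : ∀ r, r * c ∈ I' ↔ r ∈ I) (e : torsionBySet R H I ≃ₗ[R] R ⧸ I)
    (e' : torsionBySet R H I' ≃ₗ[R] R ⧸ I') :
    torsionBySet R H I ≤ LinearMap.range (LinearMap.lsmul R H c) := by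
  have : IsArtinian R (R ⧸ I) :=
    isArtinian_of_surjective_algebraMap (R := R ⧸ I) Ideal.Quotient.mk_surjective
  let μ : (R ⧸ I) →ₗ[R] R ⧸ I' := mapQ I I' (LinearMap.mulRight R c) fun r hr => (hc r).mpr hr
  have hμ : Function.Injective μ := by
    refine (injective_iff_map_eq_zero μ).mpr fun x hx => ?_
    obtain ⟨r, rfl⟩ := mkQ_surjective I x
    exact (Quotient.mk_eq_zero I).mpr ((hc r).mp ((Quotient.mk_eq_zero I').mp hx))
  let θ : (R ⧸ I) →ₗ[R] H := (torsionBySet R H I').subtype ∘ₗ e'.symm.toLinearMap ∘ₗ μ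
  have hθ : Function.Injective θ :=
    (subtype_injective _).comp (e'.symm.injective.comp hμ)
  have hmem (x : R ⧸ I) : θ x ∈ torsionBySet R H I := by
    refine (mem_torsionBySet_iff _ _).mpr fun r => ?_
    have hrx : (r : R) • x = 0 := Module.mem_annihilator.mp (Ideal.annihilator_quotient.ge r.2) x
    change (r : R) • θ x = 0
    rw [← map_smul, hrx, map_zero]
  have hsurj : Function.Surjective (θ.codRestrict _ hmem) := by
    have hend : Function.Injective (e.toLinearMap ∘ₗ θ.codRestrict _ hmem) :=
      e.injective.comp (hθ.codRestrict hmem)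
    exact (EquivLike.comp_surjective _ e).mp
      (IsArtinian.surjective_of_injective_endomorphism _ hend)
  intro h hh
  obtain ⟨x, hx⟩ := hsurj ⟨h, hh⟩
  obtain ⟨r, rfl⟩ := mkQ_surjective I x
  refine ⟨e'.symm (mkQ I' r), Eq.trans ?_ (congrArg Subtype.val hx)⟩
  change c • _ = ((e'.symm (mkQ I' (r * c)) : torsionBySet R H I') : H)
  rw [mul_comm, ← smul_eq_mul, map_smul, map_smul, coe_smul]

lemma isDomain_of_forall_end_surjective [Nontrivial R] [FaithfulSMul R H]
    (h : ∀ f : H →ₗ[R] H, f ≠ 0 → Function.Surjective f) : IsDomain R := by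
  have hsmul {r : R} (hr : r ≠ 0) : Function.Surjective (LinearMap.lsmul R H r) :=
    h _ fun hzero => hr <| FaithfulSMul.eq_of_smul_eq_smul fun x : H =>
      (LinearMap.congr_fun hzero x).trans (zero_smul R x).symm
  have : NoZeroDivisors R := ⟨fun {r s} hrs => by
    by_contra! hne
    have hH : Subsingleton H := subsingleton_of_forall_eq 0 fun x => by
      obtain ⟨y, rfl⟩ := ((hsmul hne.1).comp (hsmul hne.2)) x
      change r • s • y = 0
      rw [smul_smul, hrs, zero_smul]
    exact one_ne_zero (α := R) (FaithfulSMul.eq_of_smul_eq_smul fun x : H => Subsingleton.elim _ _)⟩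
  exact NoZeroDivisors.to_isDomain R

end Endomorphisms

section TopLocalCohomology

open RingTheory.Sequence Submodule

variable {R : Type u} [CommRing R] [IsNoetherianRing R] [IsLocalRing R] {d : ℕ} {rs : List R}

/-- The module `H^d_m(R)`, which is the top local cohomology when `d = dim R`. -/
noncomputable abbrev topLocalCohomology (R : Type u) [CommRing R] [IsLocalRing R] (d : ℕ) :
    ModuleCat.{u} R :=
  (localCohomology (maximalIdeal R) d).obj (ModuleCat.of R R)

lemma gradeGE_maximalIdeal_of_isRegular (hrs : IsRegular R rs) :
    GradeGE (maximalIdeal R) (ModuleCat.of R R) rs.length := by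
  refine gradeGE_length_of_isRegular (M := ModuleCat.of R R) hrs
    (ofList_le_maximalIdeal_of_isRegular hrs) ?_
  exact (Ideal.mul_top _).trans_ne (maximalIdeal.isMaximal R).ne_top

lemma nonempty_torsionTopLocalCohomologyEquiv (hdim : ringKrullDim R = d) (hrs : IsRegular R rs)
    (hlen : rs.length = d) :
    Nonempty (torsionBySet R (topLocalCohomology R d) (Ideal.ofList rs) ≃ₗ[R]
      R ⧸ Ideal.ofList rs) := by
  subst hlen
  have := isArtinianRing_quotient_ofList hrs hdim
  obtain ⟨k, hk⟩ := exists_maximalIdeal_pow_le_of_isArtinianRing_quotient (Ideal.ofList rs)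
  obtain ⟨e⟩ := nonempty_extEquiv_quotient_ofList hrs
  exact ⟨(gradeGE_maximalIdeal_of_isRegular hrs).torsionLocalCohomologyEquiv hk ≪≫ₗ e⟩

lemma smul_topLocalCohomology_surjective_of_isRegular_cons (hdim : ringKrullDim R = d) {a : R}
    {ys : List R} (hreg : IsRegular R (a :: ys)) (hlen : (a :: ys).length = d) :
    Function.Surjective (LinearMap.lsmul R (topLocalCohomology R d) a) := by
  intro h
  obtain ⟨k, hk⟩ := exists_mem_torsionBySet_pow h
  have hpow := isRegular_map_pow hreg k
  rw [List.map_cons] at hpow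
  have hpowlen : (a ^ (k + 1) :: ys.map (· ^ (k + 1))).length = d := by simpa using hlen
  have hle : Ideal.ofList (a ^ (k + 1) :: ys.map (· ^ (k + 1))) ≤ maximalIdeal R ^ k :=
    (ofList_map_pow_le (ofList_le_maximalIdeal_of_isRegular hreg) (k + 1)).trans
      (Ideal.pow_le_pow_right k.le_succ)
  obtain ⟨e⟩ := nonempty_torsionTopLocalCohomologyEquiv hdim hpow hpowlen
  obtain ⟨e'⟩ := nonempty_torsionTopLocalCohomologyEquiv hdim (isRegular_pow_cons hpow 1) hpowlen
  have := isArtinianRing_quotient_ofList hpow (hpowlen ▸ hdim)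
  obtain ⟨x, rfl⟩ := torsionBySet_le_range_lsmul (mul_mem_ofList_sq_cons_iff hpow) e e'
    (torsionBySet_le_torsionBySet_of_subset hle hk)
  exact ⟨a ^ k • x, by rw [LinearMap.lsmul_apply, LinearMap.lsmul_apply, smul_smul, pow_succ']⟩

lemma smul_topLocalCohomology_surjective (hdim : ringKrullDim R = d) (hrs : IsRegular R rs)
    (hlen : rs.length = d) {a : R} (ha : a ∈ nonZeroDivisors R) :
    Function.Surjective (LinearMap.lsmul R (topLocalCohomology R d) a) := by
  by_cases hunit : IsUnit a
  · obtain ⟨u, rfl⟩ := hunit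
    exact fun h => ⟨(↑u⁻¹ : R) • h, by rw [LinearMap.lsmul_apply, smul_smul, u.mul_inv, one_smul]⟩
  have hgrade := gradeGE_maximalIdeal_of_isRegular hrs
  cases hn : rs.length with
  | zero =>
    have hdim0 : Ring.KrullDimLE 0 R := by
      rw [Ring.krullDimLE_iff, hdim, ← hlen, hn]
    have := isArtinianRing_iff_isNoetherianRing_krullDimLE_zero.mpr ⟨inferInstance, hdim0⟩
    exact absurd (IsArtinianRing.isUnit_of_mem_nonZeroDivisors ha) hunit
  | succ n =>
    rw [hn] at hgrade
    obtain ⟨ys, hys, hreg⟩ := hgrade.exists_isRegular_cons ((mem_maximalIdeal a).mpr hunit)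
      (Module.Flat.isSMulRegular_of_nonZeroDivisors ha)
    exact smul_topLocalCohomology_surjective_of_isRegular_cons hdim hreg (by simp [hys, ← hlen, hn])

end TopLocalCohomology

/-- Let `R` be a `d`-dimensional complete Noetherian local Cohen–Macaulay ring. Then every
nonzero endomorphism of the top local cohomology `H^d_m(R)` is surjective if and only if `R`
is an integral domain. -/
theorem top_localCohomology_endo_surjective_iff_isDomain
    (R : Type u) [CommRing R] [IsNoetherianRing R] [IsLocalRing R]
    [IsAdicComplete (maximalIdeal R) R]
    (hCM : IsCohenMacaulayLocalRing R)
    (d : ℕ) (hdim : ringKrullDim R = d) :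
    (∀ f : ((localCohomology (maximalIdeal R) d).obj (ModuleCat.of R R)) →ₗ[R]
        ((localCohomology (maximalIdeal R) d).obj (ModuleCat.of R R)),
      f ≠ 0 → Function.Surjective f) ↔ IsDomain R := by
  obtain ⟨rs, -, hreg, hrs⟩ := hCM
  have hlen : rs.length = d := Nat.cast_injective (R := WithBot ℕ∞) (hrs.trans hdim)
  let I (n : ℕ) : Ideal R := Ideal.ofList (rs.map (· ^ (n + 1)))
  have hI : Antitone I := fun _ _ h => antitone_ofList_map_pow rs (Nat.succ_le_succ h)
  have hIm (n : ℕ) : I n ≤ maximalIdeal R ^ n :=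
    (ofList_map_pow_le (ofList_le_maximalIdeal_of_isRegular hreg) (n + 1)).trans
      (Ideal.pow_le_pow_right n.le_succ)
  have e (n : ℕ) := nonempty_torsionTopLocalCohomologyEquiv hdim (isRegular_map_pow hreg n)
    ((List.length_map _).trans hlen)
  refine ⟨fun hsurj => ?_, fun hdom f hf => ?_⟩
  · have := faithfulSMul_of_torsionBySet_equiv hIm e
    exact isDomain_of_forall_end_surjective hsurj
  · obtain ⟨a, ha⟩ :=
      exists_end_eq_smul_of_torsionBySet_equiv hI hIm e exists_mem_torsionBySet_pow f
    obtain rfl : f = LinearMap.lsmul R (topLocalCohomology R d) a := LinearMap.ext ha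
    have ha0 : a ≠ 0 := fun h => hf (by rw [h, map_zero])
    exact smul_topLocalCohomology_surjective hdim hreg hlen
      (mem_nonZeroDivisors_of_ne_zero ha0)
end

section
/- Let R be a Noetherian local ring that is not a field. Then the m-adic completion R̂ has finite injective dimension as an R-module if and only if R is Gorenstein. -/
open CategoryTheory IsLocalRing

universe u

/-- An `R`-module `M` has finite injective dimension if `Ext^i_R(-, M)` vanishes for all
sufficiently large `i`. -/
def HasFiniteInjectiveDimension (R : Type u) [CommRing R] (M : ModuleCat.{u} R) : Prop :=
  ∃ n : ℕ, ∀ i : ℕ, n < i → ∀ N : ModuleCat.{u} R,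
    Subsingleton (((Ext R (ModuleCat R) i).obj (Opposite.op N)).obj M)

/-- A Noetherian local ring is Gorenstein if it has finite injective dimension over itself. -/
def IsGorensteinLocalRing (R : Type u) [CommRing R] [IsLocalRing R] : Prop :=
  HasFiniteInjectiveDimension R (ModuleCat.of R R)

/-! By Baer's criterion and dimension shifting, `M` has injective dimension at most `n` if and only
if `Ext^{n+1}(R ⧸ I, M) = 0` for every ideal `I`. Over a Noetherian ring `R ⧸ I` has a resolution by
finite free modules, and `F ⊗ Hom(P, M) ≅ Hom(P, F ⊗ M)` for `P` finitely presented and `F` flat.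
Hence for `F` faithfully flat `Ext^{n+1}(R ⧸ I, M)` and `Ext^{n+1}(R ⧸ I, F ⊗ M)` vanish together,
so `M` and `F ⊗ M` have the same injective dimension. Now take `M = R` and `F` the completion of the
Noetherian local ring `R`, which is faithfully flat. -/

open scoped TensorProduct

section TensorHom

variable {R K P : Type*} [CommRing R] [AddCommGroup K] [Module R K] [AddCommGroup P] [Module R P]
  (F M : Type*) [AddCommGroup F] [Module R F] [AddCommGroup M] [Module R M]

theorem lTensorHomToHomLTensor_comp_lTensor_lcomp (f : K →ₗ[R] P) :
    TensorProduct.lTensorHomToHomLTensor (.id R) K F M ∘ₗ (f.lcomp R M).lTensor F =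
      f.lcomp R (F ⊗[R] M) ∘ₗ TensorProduct.lTensorHomToHomLTensor (.id R) P F M := by
  ext
  simp

theorem lTensorHomToHomLTensor_bijective_of_finitePresentation_of_flat
    [Module.FinitePresentation R P] [Module.Flat R F] :
    Function.Bijective (TensorProduct.lTensorHomToHomLTensor (.id R) P F M) := by
  obtain ⟨n, m, f, g, hf, hgf⟩ := Module.FinitePresentation.exists_fin' R P
  have bijective_free (k : ℕ) :
      Function.Bijective (TensorProduct.lTensorHomToHomLTensor (.id R) (Fin k → R) F M) := by
    rw [← lTensorHomEquivHomLTensor_toLinearMap]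
    exact (lTensorHomEquivHomLTensor R (Fin k → R) F M).bijective
  exact LinearMap.bijective_of_bijective_of_injective_of_left_exact
    ((f.lcomp R M).lTensor F) ((g.lcomp R M).lTensor F)
    (f.lcomp R (F ⊗[R] M)) (g.lcomp R (F ⊗[R] M)) _ _ _
    (lTensorHomToHomLTensor_comp_lTensor_lcomp F M f).symm
    (lTensorHomToHomLTensor_comp_lTensor_lcomp F M g).symm
    (Module.Flat.lTensor_exact F (LinearMap.exact_lcomp_of_exact_of_surjective M hgf hf))
    (LinearMap.exact_lcomp_of_exact_of_surjective _ hgf hf)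
    (bijective_free n) (bijective_free m).injective
    (Module.Flat.lTensor_preserves_injective_linearMap _
      (LinearMap.lcomp_injective_of_surjective f hf))
    (LinearMap.lcomp_injective_of_surjective f hf)

theorem lcomp_tensorProduct_surjective_iff_of_faithfullyFlat [Module.FaithfullyFlat R F]
    [Module.FinitePresentation R K] [Module.FinitePresentation R P] (f : K →ₗ[R] P) :
    Function.Surjective (f.lcomp R (F ⊗[R] M)) ↔ Function.Surjective (f.lcomp R M) := by
  have bijective_K : Function.Bijective
      (TensorProduct.lTensorHomToHomLTensor (.id R) K F M) :=
    lTensorHomToHomLTensor_bijective_of_finitePresentation_of_flat F M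
  have bijective_P : Function.Bijective
      (TensorProduct.lTensorHomToHomLTensor (.id R) P F M) :=
    lTensorHomToHomLTensor_bijective_of_finitePresentation_of_flat F M
  rw [← Module.FaithfullyFlat.lTensor_surjective_iff_surjective R F (f.lcomp R M),
    ← Function.Surjective.of_comp_iff (f.lcomp R (F ⊗[R] M)) bijective_P.surjective,
    ← LinearMap.coe_comp, ← lTensorHomToHomLTensor_comp_lTensor_lcomp, LinearMap.coe_comp]
  exact Function.Surjective.of_comp_iff' bijective_K _

end TensorHom

section DimensionShifting

universe w

variable {C : Type*} [Category* C] [Abelian C] [HasExt.{w} C] {S : ShortComplex C}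

theorem subsingleton_ext_one_X₃_iff_of_projective (hS : S.ShortExact) [Projective S.X₂] (M : C) :
    Subsingleton (Abelian.Ext S.X₃ M 1) ↔
      Function.Surjective (fun g : S.X₂ ⟶ M ↦ S.f ≫ g) := by
  refine ⟨fun h f ↦ ?_, fun h ↦ subsingleton_of_forall_eq 0 fun α ↦ ?_⟩
  · obtain ⟨x, hx⟩ := Abelian.Ext.contravariant_sequence_exact₁ hS M (Abelian.Ext.mk₀ f)
      (add_zero 1) (Subsingleton.elim _ _)
    obtain ⟨g, rfl⟩ := (Abelian.Ext.mk₀_bijective _ _).surjective x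
    exact ⟨g, (Abelian.Ext.mk₀_bijective _ _).injective (by simpa using hx)⟩
  · obtain ⟨x, rfl⟩ := Abelian.Ext.contravariant_sequence_exact₃ hS M α
      (Abelian.Ext.eq_zero_of_projective _) (add_zero 1)
    obtain ⟨f, rfl⟩ := (Abelian.Ext.mk₀_bijective _ _).surjective x
    obtain ⟨g, rfl⟩ := h f
    rw [← Abelian.Ext.mk₀_comp_mk₀, hS.extClass_comp_assoc]

theorem subsingleton_ext_X₃_iff_of_projective (hS : S.ShortExact) [Projective S.X₂] (M : C)
    (i : ℕ) :
    Subsingleton (Abelian.Ext S.X₃ M (i + 2)) ↔ Subsingleton (Abelian.Ext S.X₁ M (i + 1)) := by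
  have degree : 1 + (i + 1) = i + 2 := by lia
  refine ⟨fun _ ↦ subsingleton_of_forall_eq 0 fun α ↦ ?_,
    fun _ ↦ subsingleton_of_forall_eq 0 fun α ↦ ?_⟩
  · obtain ⟨x, rfl⟩ := Abelian.Ext.contravariant_sequence_exact₁ hS M α degree
      (Subsingleton.elim _ _)
    rw [Abelian.Ext.eq_zero_of_projective x, Abelian.Ext.comp_zero]
  · obtain ⟨x, rfl⟩ := Abelian.Ext.contravariant_sequence_exact₃ hS M α
      (Abelian.Ext.eq_zero_of_projective _) degree
    rw [Subsingleton.elim x 0, Abelian.Ext.comp_zero]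

theorem subsingleton_ext_X₁_iff_of_injective (hS : S.ShortExact) [Injective S.X₂] (N : C)
    (i : ℕ) :
    Subsingleton (Abelian.Ext N S.X₁ (i + 2)) ↔ Subsingleton (Abelian.Ext N S.X₃ (i + 1)) := by
  refine ⟨fun _ ↦ subsingleton_of_forall_eq 0 fun α ↦ ?_,
    fun _ ↦ subsingleton_of_forall_eq 0 fun α ↦ ?_⟩
  · obtain ⟨x, rfl⟩ := Abelian.Ext.covariant_sequence_exact₃ N hS α rfl (Subsingleton.elim _ _)
    rw [Abelian.Ext.eq_zero_of_injective x, Abelian.Ext.zero_comp]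
  · obtain ⟨x, rfl⟩ := Abelian.Ext.covariant_sequence_exact₁ N hS α
      (Abelian.Ext.eq_zero_of_injective _) rfl
    rw [Subsingleton.elim x 0, Abelian.Ext.zero_comp]

end DimensionShifting

section InjectiveDimension

variable {R : Type u} [CommRing R]

theorem subsingleton_ext_one_X₃_iff_lcomp_surjective {S : ShortComplex (ModuleCat.{u} R)}
    (hS : S.ShortExact) [Projective S.X₂] (M : ModuleCat.{u} R) :
    Subsingleton (Abelian.Ext S.X₃ M 1) ↔ Function.Surjective (S.f.hom.lcomp R M) := by
  rw [subsingleton_ext_one_X₃_iff_of_projective hS M,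
    ← Function.Surjective.of_comp_iff' ModuleCat.homEquiv.bijective,
    ← Function.Surjective.of_comp_iff _ ModuleCat.homEquiv.surjective]
  rfl

theorem subsingleton_ext_one_quotient_iff (I : Ideal R) (M : ModuleCat.{u} R) :
    Subsingleton (Abelian.Ext (ModuleCat.of R (R ⧸ I)) M 1) ↔
      Function.Surjective (I.subtype.lcomp R M) := by
  have exact_I := LinearMap.exact_subtype_mkQ I
  let S := ModuleCat.shortComplexOfCompEqZero I.subtype I.mkQ exact_I.linearMap_comp_eq_zero
  have hS : S.ShortExact :=
    ModuleCat.shortComplex_shortExact S exact_I I.subtype_injective I.mkQ_surjective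
  have : Projective S.X₂ := ModuleCat.projective_of_free (Module.Basis.singleton Unit R)
  exact subsingleton_ext_one_X₃_iff_lcomp_surjective hS M

theorem hasInjectiveDimensionLE_iff_subsingleton_ext_quotient (M : ModuleCat.{u} R) (n : ℕ) :
    HasInjectiveDimensionLE M n ↔
      ∀ I : Ideal R, Subsingleton (Abelian.Ext (ModuleCat.of R (R ⧸ I)) M (n + 1)) := by
  induction n generalizing M with
  | zero =>
    simp_rw [zero_add, subsingleton_ext_one_quotient_iff]
    rw [HasInjectiveDimensionLE, zero_add, ← injective_iff_hasInjectiveDimensionLT_one,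
      ← Module.injective_iff_injective_object, ← Module.Baer.iff_injective,
      Module.Baer.iff_surjective]
  | succ n ih =>
    obtain ⟨J, _, f, _⟩ := EnoughInjectives.presentation M
    let S := ShortComplex.mk f (Limits.cokernel.π f) (Limits.cokernel.condition f)
    have hS : S.ShortExact := { exact := ShortComplex.exact_cokernel f }
    have : Injective S.X₂ := ‹Injective J›
    exact (hS.hasInjectiveDimensionLT_X₃_iff n this).symm.trans <| (ih S.X₃).trans <|
      forall_congr' fun I ↦ (subsingleton_ext_X₁_iff_of_injective hS _ n).symm

theorem subsingleton_ext_tensorProduct_iff_of_faithfullyFlat [IsNoetherianRing R]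
    (F M : Type u) [AddCommGroup F] [Module R F] [Module.FaithfullyFlat R F]
    [AddCommGroup M] [Module R M] (N : ModuleCat.{u} R) [Module.Finite R N] (i : ℕ) :
    Subsingleton (Abelian.Ext N (ModuleCat.of R (F ⊗[R] M)) (i + 1)) ↔
      Subsingleton (Abelian.Ext N (ModuleCat.of R M) (i + 1)) := by
  induction i using Nat.strong_induction_on generalizing N with | _ i ih
  obtain ⟨P, _, _, _, _, f, hf⟩ := Module.exists_finite_presentation R N
  have hS := LinearMap.shortExact_shortComplexKer hf
  have : Projective f.shortComplexKer.X₂ :=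
    ModuleCat.projective_of_free (Module.Free.chooseBasis R P)
  cases i with
  | zero =>
    have := Module.finitePresentation_of_finite R (LinearMap.ker f)
    have := Module.finitePresentation_of_finite R P
    exact (subsingleton_ext_one_X₃_iff_lcomp_surjective hS (.of R (F ⊗[R] M))).trans <|
      (lcomp_tensorProduct_surjective_iff_of_faithfullyFlat F M (LinearMap.ker f).subtype).trans
        (subsingleton_ext_one_X₃_iff_lcomp_surjective hS (.of R M)).symm
  | succ i =>
    exact (subsingleton_ext_X₃_iff_of_projective hS _ i).trans <|
      (ih i i.lt_succ_self (.of R (LinearMap.ker f))).trans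
        (subsingleton_ext_X₃_iff_of_projective hS _ i).symm

theorem hasInjectiveDimensionLE_tensorProduct_iff_of_faithfullyFlat [IsNoetherianRing R]
    (F M : Type u) [AddCommGroup F] [Module R F] [Module.FaithfullyFlat R F]
    [AddCommGroup M] [Module R M] (n : ℕ) :
    HasInjectiveDimensionLE (ModuleCat.of R (F ⊗[R] M)) n ↔
      HasInjectiveDimensionLE (ModuleCat.of R M) n := by
  simp_rw [hasInjectiveDimensionLE_iff_subsingleton_ext_quotient,
    subsingleton_ext_tensorProduct_iff_of_faithfullyFlat]

end InjectiveDimension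

section DerivedFunctorExt

universe w

theorem subsingleton_derivedFunctorExt_succ_iff {R C : Type*} [Ring R] [Category* C] [Abelian C]
    [Linear R C] [EnoughProjectives C] [HasExt.{w} C] (X Y : C) (i : ℕ) :
    Subsingleton (((Ext R C (i + 1)).obj (Opposite.op X)).obj Y) ↔
      Subsingleton (Abelian.Ext X Y (i + 1)) := by
  -- A projective resolution computes both `Ext` as a derived functor and `Abelian.Ext`.
  let P := projectiveResolution X
  trans ∀ f : P.complex.X (i + 1) ⟶ Y, P.complex.d (i + 2) (i + 1) ≫ f = 0 →
    ∃ g : P.complex.X i ⟶ Y, P.complex.d (i + 1) i ≫ g = f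
  · rw [← ModuleCat.isZero_iff_subsingleton, (P.isoExt (R := R) (i + 1) Y).isZero_iff,
      ← HomologicalComplex.exactAt_iff_isZero_homology,
      HomologicalComplex.exactAt_iff' _ i (i + 1) (i + 2) (by simp) (by simp),
      ShortComplex.moduleCat_exact_iff]
    rfl
  · refine ⟨fun h ↦ subsingleton_of_forall_eq 0 fun α ↦ ?_, fun h f hf ↦ ?_⟩
    · obtain ⟨f, hf, rfl⟩ := P.extMk_surjective α (i + 2) rfl
      exact (P.extMk_eq_zero_iff f _ rfl hf i rfl).2 (h f hf)
    · exact (P.extMk_eq_zero_iff f _ rfl hf i rfl).1 (Subsingleton.elim _ _)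

theorem hasFiniteInjectiveDimension_iff_exists_hasInjectiveDimensionLE {R : Type u} [CommRing R]
    (M : ModuleCat.{u} R) :
    HasFiniteInjectiveDimension R M ↔ ∃ n : ℕ, HasInjectiveDimensionLE M n := by
  refine exists_congr fun n ↦ ?_
  rw [HasInjectiveDimensionLE, hasInjectiveDimensionLT_iff]
  refine forall₃_congr fun i hi N ↦ ?_
  obtain ⟨i, rfl⟩ := Nat.exists_eq_succ_of_ne_zero (Nat.ne_zero_of_lt hi)
  exact (subsingleton_derivedFunctorExt_succ_iff N M i).trans (subsingleton_iff_forall_eq 0)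

end DerivedFunctorExt

theorem hasFiniteInjectiveDimension_congr {R M N : Type u} [CommRing R] [AddCommGroup M]
    [Module R M] [AddCommGroup N] [Module R N] (e : M ≃ₗ[R] N) :
    HasFiniteInjectiveDimension R (ModuleCat.of R M) ↔
      HasFiniteInjectiveDimension R (ModuleCat.of R N) := by
  simp_rw [hasFiniteInjectiveDimension_iff_exists_hasInjectiveDimensionLE,
    ModuleCat.hasInjectiveDimensionLE_iff_of_linearEquiv
      (M := ModuleCat.of R M) (N := ModuleCat.of R N) e]

theorem adicCompletion_maximalIdeal_faithfullyFlat (R : Type*) [CommRing R] [IsNoetherianRing R]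
    [IsLocalRing R] : Module.FaithfullyFlat R (AdicCompletion (maximalIdeal R) R) :=
  Module.FaithfullyFlat.of_flat_of_isLocalHom

theorem adicCompletion_finite_injdim_iff_gorenstein_general (R F M : Type u) [CommRing R]
    [IsNoetherianRing R] [AddCommGroup F] [Module R F] [Module.FaithfullyFlat R F]
    [AddCommGroup M] [Module R M] :
    HasFiniteInjectiveDimension R (ModuleCat.of R (F ⊗[R] M)) ↔
      HasFiniteInjectiveDimension R (ModuleCat.of R M) := by
  simp_rw [hasFiniteInjectiveDimension_iff_exists_hasInjectiveDimensionLE,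
    hasInjectiveDimensionLE_tensorProduct_iff_of_faithfullyFlat]

/-- Let `R` be a Noetherian local ring that is not a field. Then the `m`-adic completion `R̂`
has finite injective dimension as an `R`-module if and only if `R` is Gorenstein. -/
theorem adicCompletion_finite_injdim_iff_gorenstein
    (R : Type u) [CommRing R] [IsNoetherianRing R] [IsLocalRing R] (hR : ¬ IsField R) :
    HasFiniteInjectiveDimension R
      (ModuleCat.of R (AdicCompletion (maximalIdeal R) R)) ↔
    IsGorensteinLocalRing R := by
  have := adicCompletion_maximalIdeal_faithfullyFlat R
  exact (hasFiniteInjectiveDimension_congr (TensorProduct.rid R _).symm).trans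
    (adicCompletion_finite_injdim_iff_gorenstein_general R _ R)
end

section
/- Let R be a Noetherian local domain of dimension d > 1 and let x be a nonzero element of the maximal ideal. Then the localization R_x = R[1/x] is a proper R-submodule of Q = Frac(R), and Hom_R(R_x, R̂) = 0, where R̂ is the m-adic completion. -/
open IsLocalRing

set_option synthInstance.maxHeartbeats 1000000

universe u

/-!
If `R[1/x]` is a field, then every nonzero prime of `R` contains `x`: for `y ≠ 0` in the prime,
`1/y` has a power of `x` as a denominator, so `y` divides that power. But a prime `P` of height at
least `2` contains some `y` outside the finitely many minimal primes of `R` and of `(x)`. By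
Krull's principal ideal theorem, a minimal prime of `(y)` inside `P` has height `1`; if it
contained `x`, it would be a minimal prime of `(x)`.

Every element of `R[1/x]` is infinitely `x`-divisible, so its image under a linear map to an
`I`-adically separated module `N` with `x ∈ I` lies in `⋂ Iⁿ N = 0`.
-/

section AdjoinInverse

variable {R A : Type*} [CommSemiring R]

theorem smul_surjective_adjoin_singleton [Semiring A] [Algebra R A] {x : R} {u : A}
    (hu : x • u = 1) : Function.Surjective fun z : Algebra.adjoin R {u} ↦ x • z := fun z ↦
  ⟨⟨u, Algebra.self_mem_adjoin_singleton R u⟩ * z, Subtype.ext <| by simp [← smul_mul_assoc, hu]⟩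

variable [CommSemiring A] [Algebra R A] {x : R} {u : A}

theorem exists_pow_smul_eq_algebraMap_of_mem_adjoin (hu : x • u = 1) {z : A}
    (hz : z ∈ Algebra.adjoin R {u}) : ∃ (n : ℕ) (r : R), x ^ n • z = algebraMap R A r := by
  obtain ⟨n, hn⟩ := Algebra.pow_smul_mem_of_smul_subset_of_mem_adjoin x {u} ⊥
    (by rw [Set.smul_set_singleton, hu, Set.singleton_subset_iff]; exact one_mem _) hz
    (Subalgebra.algebraMap_mem _ x)
  obtain ⟨r, hr⟩ := Algebra.mem_bot.1 (hn n le_rfl)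
  exact ⟨n, r, hr.symm⟩

theorem exists_dvd_pow_of_mem_adjoin [FaithfulSMul R A] (hu : x • u = 1) {y : R} {v : A}
    (hv : y • v = 1) (hmem : v ∈ Algebra.adjoin R {u}) : ∃ n : ℕ, y ∣ x ^ n := by
  obtain ⟨n, r, hr⟩ := exists_pow_smul_eq_algebraMap_of_mem_adjoin hu hmem
  refine ⟨n, r, FaithfulSMul.algebraMap_injective R A ?_⟩
  calc
    algebraMap R A (x ^ n) = x ^ n • y • v := by rw [hv, Algebra.algebraMap_eq_smul_one]
    _ = y • algebraMap R A r := by rw [smul_comm, hr]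
    _ = algebraMap R A (y * r) := by rw [Algebra.smul_def, map_mul]

end AdjoinInverse

section Field

variable {R K : Type*} [CommSemiring R] [Field K] [Algebra R K] [FaithfulSMul R K]

theorem smul_inv_algebraMap_eq_one {x : R} (hx : x ≠ 0) : x • (algebraMap R K x)⁻¹ = 1 := by
  rw [Algebra.smul_def, mul_inv_cancel₀]
  simpa using hx

theorem mem_of_adjoin_inv_eq_top {x : R} (hx : x ≠ 0)
    (htop : Algebra.adjoin R {(algebraMap R K x)⁻¹} = ⊤) {p : Ideal R} [p.IsPrime]
    (hp : p ≠ ⊥) : x ∈ p := by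
  obtain ⟨y, hyp, hy⟩ := Submodule.exists_mem_ne_zero_of_ne_bot hp
  obtain ⟨n, hn⟩ := exists_dvd_pow_of_mem_adjoin (A := K)
    (smul_inv_algebraMap_eq_one hx) (smul_inv_algebraMap_eq_one hy) (htop ▸ Algebra.mem_top)
  exact ‹p.IsPrime›.mem_of_pow_mem n (p.mem_of_dvd hn hyp)

end Field

section Height

variable {R : Type*} [CommRing R]

theorem exists_mem_forall_notMem_of_height_lt {I : Ideal R} {S : Set (Ideal R)} (hS : S.Finite)
    (hprime : ∀ q ∈ S, q.IsPrime) (hheight : ∀ q ∈ S, q.height < I.height) :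
    ∃ y ∈ I, ∀ q ∈ S, y ∉ q := by
  by_contra! hcover
  obtain ⟨q, hq, hIq⟩ := (I.subset_union_prime_finite hS (f := id) ⊥ ⊥
    fun q hq _ _ ↦ hprime q hq).1 fun y hy ↦ by simpa using hcover y hy
  exact (hheight q hq).not_ge (Ideal.height_mono hIq)

variable [IsNoetherianRing R]

theorem exists_isPrime_height_eq_one_notMem {P : Ideal R} [P.IsPrime] (hP : 1 < P.height) {x : R}
    (hx : x ∈ nonZeroDivisors R) : ∃ q ≤ P, q.IsPrime ∧ q.height = 1 ∧ x ∉ q := by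
  obtain ⟨y, hyP, hy⟩ : ∃ y ∈ P, ∀ q ∈ minimalPrimes R ∪ (Ideal.span {x}).minimalPrimes, y ∉ q := by
    refine exists_mem_forall_notMem_of_height_lt
      ((minimalPrimes.finite_of_isNoetherianRing R).union
        ((Ideal.span {x}).finite_minimalPrimes_of_isNoetherianRing R))
      (fun q hq ↦ hq.elim (·.isPrime) (·.isPrime)) fun q hq ↦ lt_of_le_of_lt ?_ hP
    rcases hq with hq | hq
    · have := hq.isPrime
      exact (Ideal.height_eq_zero_iff.2 hq).trans_le zero_le_one
    · exact Ideal.height_le_one_of_isPrincipal_of_mem_minimalPrimes _ q hq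
  obtain ⟨q, hq, hqP⟩ := Ideal.exists_minimalPrimes_le
    ((Ideal.span_singleton_le_iff_mem P).2 hyP)
  have hq_prime := hq.isPrime
  have hyq : y ∈ q := (Ideal.span_singleton_le_iff_mem q).1 hq.1.2
  have hq_le : q.height ≤ 1 := Ideal.height_le_one_of_isPrincipal_of_mem_minimalPrimes _ q hq
  have hq_ne : q.height ≠ 0 := fun h ↦ hy q (.inl (Ideal.height_eq_zero_iff.1 h)) hyq
  refine ⟨q, hqP, hq_prime, hq_le.antisymm (Order.one_le_iff_ne_zero.2 hq_ne), fun hxq ↦ ?_⟩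
  have hq_min : q ∈ (Ideal.span {x}).minimalPrimes :=
    Ideal.mem_minimalPrimes_of_height_le ((Ideal.span_singleton_le_iff_mem q).2 hxq)
      (hq_le.trans (Ideal.one_le_height_span_singleton_of_mem_nonZeroDivisors hx))
  exact hy q (.inr hq_min) hyq

theorem adjoin_inv_ne_top_of_one_lt_ringKrullDim {K : Type*} [Field K] [Algebra R K]
    [FaithfulSMul R K] (hdim : 1 < ringKrullDim R) {x : R} (hx : x ≠ 0) :
    Algebra.adjoin R {(algebraMap R K x)⁻¹} ≠ ⊤ := by
  have := (FaithfulSMul.algebraMap_injective R K).isDomain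
  intro htop
  obtain ⟨P, hP, hheight⟩ : ∃ P : Ideal R, P.IsPrime ∧ 1 < P.height := by
    by_contra! hle
    refine hdim.not_ge ((ringKrullDim_le_iff_height_le 1).2 fun P hP ↦ ?_)
    exact_mod_cast hle P hP
  obtain ⟨q, -, hq, hq_one, hxq⟩ :=
    exists_isPrime_height_eq_one_notMem hheight (mem_nonZeroDivisors_of_ne_zero hx)
  exact hxq (mem_of_adjoin_inv_eq_top hx htop (Ideal.ne_bot_of_height_eq_one hq_one))

end Height

theorem linearMap_eq_zero_of_smul_surjective_of_isHausdorff {R M N : Type*} [CommRing R]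
    [AddCommGroup M] [Module R M] [AddCommGroup N] [Module R N] {I : Ideal R} [IsHausdorff I N]
    {x : R} (hx : x ∈ I) (hM : Function.Surjective fun m : M ↦ x • m) (f : M →ₗ[R] N) :
    f = 0 := by
  ext m
  refine IsHausdorff.haus ‹_› (f m) fun n ↦ SModEq.zero.2 ?_
  obtain ⟨m', rfl⟩ : ∃ m', x ^ n • m' = m := by
    simpa only [smul_iterate] using hM.iterate n m
  rw [map_smul]
  exact Submodule.smul_mem_smul (Ideal.pow_mem_pow hx n) Submodule.mem_top

theorem away_proper_and_hom_completion_eq_zero_general {R K N : Type*} [CommRing R]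
    [IsNoetherianRing R] [Field K] [Algebra R K] [FaithfulSMul R K] [AddCommGroup N] [Module R N]
    (hdim : 1 < ringKrullDim R) {I : Ideal R} [IsHausdorff I N] {x : R} (hx0 : x ≠ 0)
    (hx : x ∈ I) :
    Algebra.adjoin R {(algebraMap R K x)⁻¹} ≠ ⊤ ∧
      Subsingleton (Algebra.adjoin R {(algebraMap R K x)⁻¹} →ₗ[R] N) :=
  ⟨adjoin_inv_ne_top_of_one_lt_ringKrullDim hdim hx0,
    subsingleton_of_forall_eq 0 <| linearMap_eq_zero_of_smul_surjective_of_isHausdorff hx <|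
      smul_surjective_adjoin_singleton (smul_inv_algebraMap_eq_one hx0)⟩

/-- Let `R` be a Noetherian local domain of dimension `> 1` and `x` a nonzero element of the
maximal ideal. Then the localization `R_x = R[1/x]`, viewed inside `Q = Frac(R)`, is a proper
subring of `Q`, and `Hom_R(R_x, R̂) = 0` where `R̂` is the `m`-adic completion. -/
theorem away_proper_and_hom_completion_eq_zero
    (R : Type u) [CommRing R] [IsNoetherianRing R] [IsLocalRing R] [IsDomain R]
    (hdim : 1 < ringKrullDim R)
    (x : R) (hx0 : x ≠ 0) (hx : x ∈ maximalIdeal R) :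
    Algebra.adjoin R {(algebraMap R (FractionRing R) x)⁻¹} ≠ ⊤ ∧
    Subsingleton ((Algebra.adjoin R {(algebraMap R (FractionRing R) x)⁻¹}) →ₗ[R]
      (AdicCompletion (maximalIdeal R) R)) := by
  exact away_proper_and_hom_completion_eq_zero_general hdim hx0 hx
end
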